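/- arXiv:2011.02075 — 6 statements merged into one kernel-verified Lean document; each statement's English description precedes it below -/
import Mathlib

section
/- Let G = (V,E) be a finite simple graph with n = |V| vertices and maximum degree at most Δ, let θ ∈ (0,1] be such that ℓ = ⌈θn⌉ ≤ n, let v ∈ V, and let k ≥ 1 be an integer. For S ⊆ V, let S_v denote the vertex set of the connected component of v in the induced subgraph G[S] (with S_v = ∅ if v ∉ S). Then the number of subsets S ⊆ V with |S| = ℓ and |S_v| = k, divided by binom(n,ℓ), is at most (ℓ/n)·(2eΔθ)^{k−1}, where e is Euler's number. -/
/-!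
The vertex set `T` of the component of `v` in `G[S]` is a connected set of size `k` containing `v`,
so a union bound over such `T` gives at most `N · binom (n - k) (ℓ - k)` sets `S`, where `N` is the
number of connected `k`-sets containing `v`.

*Counting connected sets* (`card_seeded_le`). More generally, count the `k`-sets `T` inside an
allowed set `A` all of whose vertices are reachable inside `T` from `L ∩ T`, for a set `L` of `s`
seeds. Choosing a seed `u ∈ L ∩ A` and splitting according to whether `u ∈ T` gives the recursion
`c(s, k) ≤ c(s - 1, k) + c(s - 1 + Δ, k - 1)`, since in the second case the neighbours of `u` become
seeds for `T \ {u}`. The Abel polynomials `s (s + Δ k)^(k-1) / k!` dominate every solution, by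
Bernoulli's inequality. Removing `v` from a connected `k`-set leaves a `(k-1)`-set seeded by the at
most `Δ` neighbours of `v`, so `N ≤ Δ^(k-1) k^(k-2) / (k-1)! = Δ^(k-1) k^(k-1) / k! ≤ (e Δ)^(k-1)`.

*Probability that `T ⊆ S`* (`choose_sub_le`). The ratio `binom (n - k) (ℓ - k) / binom n ℓ` is the
product of `(ℓ - i) / (n - i)` over `i < k`. The factor `i = 0` is `ℓ / n`, and each later factor is
at most `2 θ` because `ℓ < θ n + 1`.
-/


open Finset

attribute [local instance] Classical.propDecidable

/-- The vertex set of the connected component of `v` in the subgraph of `G` induced on `S`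
(empty if `v ∉ S`): all `u ∈ S` reachable from `v` by a path of `G` staying inside `S`. -/
def inducedComp {V : Type} (G : SimpleGraph V) (S : Finset V) (v : V) : Set V :=
  {u | v ∈ S ∧ u ∈ S ∧ Relation.ReflTransGen (fun a b => G.Adj a b ∧ b ∈ S) v u}

/-! ### Connected sets grown from seeds -/

/-- `Seeded G L T`: every vertex of `T` can be reached, by a path of `G` staying inside `T`, from
some vertex of `L` lying in `T`. Equivalently, every component of `G[T]` meets `L`. -/
def Seeded {V : Type} (G : SimpleGraph V) (L T : Finset V) : Prop :=
  ∀ t ∈ T, ∃ w ∈ L, w ∈ T ∧ Relation.ReflTransGen (fun a b => G.Adj a b ∧ b ∈ T) w t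

/-- The `k`-element subsets of `A` seeded by `L`. -/
noncomputable def seededSets {V : Type} (G : SimpleGraph V) (L A : Finset V) (k : ℕ) :
    Finset (Finset V) :=
  (powersetCard k A).filter (fun T => Seeded G L T)

lemma mem_seededSets {V : Type} {G : SimpleGraph V} {L A T : Finset V} {k : ℕ} :
    T ∈ seededSets G L A k ↔ (T ⊆ A ∧ T.card = k) ∧ Seeded G L T := by
  simp [seededSets, mem_powersetCard]

/-- When a vertex `u` is removed, its neighbours take over its role as a seed: a path through `u`
is replaced by its part after the last visit to `u`. -/
lemma Seeded.erase {V : Type} [Fintype V] [DecidableEq V] {G : SimpleGraph V} [DecidableRel G.Adj]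
    {L T : Finset V} (h : Seeded G L T) (u : V) :
    Seeded G (L.erase u ∪ G.neighborFinset u) (T.erase u) := by
  intro t ht
  obtain ⟨htu, htT⟩ := mem_erase.1 ht
  obtain ⟨w, hwL, hwT, hw⟩ := h t htT
  have key : ∀ x, Relation.ReflTransGen (fun a b => G.Adj a b ∧ b ∈ T) w x → x = u ∨
      ∃ w' ∈ L.erase u ∪ G.neighborFinset u, w' ∈ T.erase u ∧
        Relation.ReflTransGen (fun a b => G.Adj a b ∧ b ∈ T.erase u) w' x := by
    intro x hx
    induction hx with
    | refl =>
      by_cases hwu : w = u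
      · exact Or.inl hwu
      · exact Or.inr ⟨w, by simp [hwu, hwL], by simp [hwu, hwT], .refl⟩
    | @tail x y _ hxy ih =>
      by_cases hyu : y = u
      · exact Or.inl hyu
      have hyT : y ∈ T.erase u := mem_erase.2 ⟨hyu, hxy.2⟩
      right
      rcases ih with rfl | ⟨w', h1, h2, h3⟩
      · exact ⟨y, by simp [hxy.1], hyT, .refl⟩
      · exact ⟨w', h1, h2, h3.tail ⟨hxy.1, hyT⟩⟩
  exact (key t hw).resolve_left htu

lemma card_seeded_zero_le {V : Type} (G : SimpleGraph V) (L A : Finset V) :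
    (seededSets G L A 0).card ≤ 1 := by
  refine (card_le_card (filter_subset _ _)).trans ?_
  simp

/-- Exploration step: decide whether the seed `u` belongs to the set. -/
lemma card_seeded_step {V : Type} [Fintype V] [DecidableEq V] (G : SimpleGraph V)
    [DecidableRel G.Adj] (L A : Finset V) (u : V) (k : ℕ) :
    (seededSets G L A (k + 1)).card ≤ (seededSets G (L.erase u) (A.erase u) (k + 1)).card +
      (seededSets G (L.erase u ∪ G.neighborFinset u) (A.erase u) k).card := by
  have hsub : seededSets G L A (k + 1) ⊆ seededSets G (L.erase u) (A.erase u) (k + 1) ∪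
      (seededSets G (L.erase u ∪ G.neighborFinset u) (A.erase u) k).image (insert u) := by
    intro T hT
    obtain ⟨⟨hTA, hTk⟩, hTs⟩ := mem_seededSets.1 hT
    rw [mem_union]
    by_cases hu : u ∈ T
    · right
      refine mem_image.2 ⟨T.erase u, mem_seededSets.2 ⟨⟨erase_subset_erase u hTA, ?_⟩,
        hTs.erase u⟩, insert_erase hu⟩
      rw [card_erase_of_mem hu, hTk]
      rfl
    · left
      refine mem_seededSets.2 ⟨⟨fun t ht => mem_erase.2 ⟨?_, hTA ht⟩, hTk⟩, fun t ht => ?_⟩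
      · rintro rfl
        exact hu ht
      · obtain ⟨w, hwL, hwT, hw⟩ := hTs t ht
        refine ⟨w, mem_erase.2 ⟨?_, hwL⟩, hwT, hw⟩
        rintro rfl
        exact hu hwT
  exact (card_le_card hsub).trans ((card_union_le _ _).trans (Nat.add_le_add_left card_image_le _))

/-- The Abel polynomials satisfy the recursion of the exploration step as an inequality; here
`s + 1` is the number of seeds and the size of the set is `k + 2`. -/
lemma abel_step (s d k : ℕ) :
    s * (s + d * (k + 2)) ^ (k + 1) + (k + 2) * ((s + d) * (s + d + d * (k + 1)) ^ k) ≤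
      (s + 1) * (s + 1 + d * (k + 2)) ^ (k + 1) := by
  set m := s + d * (k + 2) with hm
  have e1 : s + d + d * (k + 1) = m := by rw [hm]; ring
  have e2 : s + 1 + d * (k + 2) = m + 1 := by rw [hm]; ring
  rw [e1, e2]
  have bern : m ^ (k + 1) + (k + 1) * m ^ k ≤ (m + 1) ^ (k + 1) := by
    have hb := pow_add_mul_le_add_pow_of_sq_nonneg (Nat.zero_le m) (Nat.zero_le _)
      (Nat.zero_le _) (Nat.zero_le (2 * m + 1)) (k + 1)
    simpa using hb
  have e3 : s * m ^ (k + 1) + (k + 2) * ((s + d) * m ^ k) =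
      m ^ k * ((s + 1) * m + (k + 1) * s) := by
    rw [hm]; ring
  calc _ = m ^ k * ((s + 1) * m + (k + 1) * s) := e3
    _ ≤ (s + 1) * (m ^ (k + 1) + (k + 1) * m ^ k) := by
      have : (s + 1) * (m ^ (k + 1) + (k + 1) * m ^ k) =
        m ^ k * ((s + 1) * m + (k + 1) * s) + m ^ k * (k + 1) := by ring
      omega
    _ ≤ _ := by gcongr

/-- Bound on the number of sets of size `k + 1` grown from the seeds `L` in a graph of maximum degree `Δ`. -/
lemma card_seeded_le {V : Type} [Fintype V] [DecidableEq V] (G : SimpleGraph V)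
    [DecidableRel G.Adj] (Δ : ℕ) (hdeg : ∀ v : V, G.degree v ≤ Δ) (A : Finset V) :
    ∀ (L : Finset V) (k : ℕ), (k + 1).factorial * (seededSets G L A (k + 1)).card ≤
      L.card * (L.card + Δ * (k + 1)) ^ k := by
  induction A using Finset.strongInduction with
  | H A ih =>
  intro L k
  by_cases hLA : ∃ u ∈ L, u ∈ A
  · obtain ⟨u, huL, huA⟩ := hLA
    have hss := erase_ssubset huA
    obtain ⟨s, hs⟩ : ∃ s, (L.erase u).card = s := ⟨_, rfl⟩
    have hL : L.card = s + 1 := by rw [← hs, card_erase_add_one huL]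
    have hstep := card_seeded_step G L A u k
    have h1 := ih _ hss (L.erase u) k
    rw [hs] at h1
    rw [hL]
    refine (Nat.mul_le_mul_left _ hstep).trans ?_
    rw [mul_add]
    refine (Nat.add_le_add_right h1 _).trans ?_
    rcases k with _ | k
    · have := card_seeded_zero_le G (L.erase u ∪ G.neighborFinset u) (A.erase u)
      simp
      omega
    · have h2 := ih _ hss (L.erase u ∪ G.neighborFinset u) k
      have hc : (L.erase u ∪ G.neighborFinset u).card ≤ s + Δ := by
        refine (card_union_le _ _).trans ?_
        rw [hs]
        exact Nat.add_le_add_left (hdeg u) s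
      have h3 : (k + 1).factorial *
          (seededSets G (L.erase u ∪ G.neighborFinset u) (A.erase u) (k + 1)).card ≤
          (s + Δ) * (s + Δ + Δ * (k + 1)) ^ k := h2.trans (by gcongr)
      refine le_trans ?_ (abel_step s Δ k)
      rw [Nat.factorial_succ (k + 1), mul_assoc]
      exact Nat.add_le_add_left (Nat.mul_le_mul_left _ h3) _
  · -- No seed is available, so only the empty set is seeded.
    have : seededSets G L A (k + 1) = ∅ := by
      refine eq_empty_of_forall_notMem fun T hT => ?_
      obtain ⟨⟨hTA, hTk⟩, hTs⟩ := mem_seededSets.1 hT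
      obtain ⟨t, ht⟩ : T.Nonempty := card_pos.1 (by omega)
      obtain ⟨w, hwL, hwT, -⟩ := hTs t ht
      exact hLA ⟨w, hwL, hTA hwT⟩
    simp [this]

lemma succ_pow_le_exp_mul_factorial (j : ℕ) :
    ((j : ℝ) + 1) ^ j ≤ Real.exp 1 ^ j * ((j + 1).factorial : ℝ) := by
  have h := Real.pow_div_factorial_le_exp ((j : ℝ) + 1) (by positivity) (j + 1)
  have hf : (0 : ℝ) < ((j + 1).factorial : ℝ) := by positivity
  have he : Real.exp ((j : ℝ) + 1) = Real.exp 1 ^ j * Real.exp 1 := by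
    rw [Real.exp_add, ← Real.exp_one_pow]
  rw [div_le_iff₀ hf, he, pow_succ] at h
  rcases Nat.lt_or_ge j 2 with hj | hj
  · interval_cases j
    · simp
    · norm_num [Nat.factorial]
  · have h3 : Real.exp 1 ≤ (j : ℝ) + 1 := by
      have : (2 : ℝ) ≤ j := by exact_mod_cast hj
      linarith [Real.exp_one_lt_d9]
    have h4 : ((j : ℝ) + 1) ^ j * ((j : ℝ) + 1) ≤
        (Real.exp 1 ^ j * ((j + 1).factorial : ℝ)) * ((j : ℝ) + 1) := by
      refine h.trans ?_
      rw [mul_right_comm]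
      gcongr
    exact le_of_mul_le_mul_right h4 (by positivity)

/-- At most `(e Δ)^j` sets of size `j` can be grown from the neighbours of a given vertex. -/
lemma card_seeded_neighbors_le {V : Type} [Fintype V] [DecidableEq V] (G : SimpleGraph V)
    [DecidableRel G.Adj] (Δ : ℕ) (hdeg : ∀ v : V, G.degree v ≤ Δ) (A : Finset V) (v : V) (j : ℕ) :
    ((seededSets G (G.neighborFinset v) A j).card : ℝ) ≤ (Real.exp 1 * Δ) ^ j := by
  rcases j with _ | j
  · simpa using card_seeded_zero_le G (G.neighborFinset v) A
  · have h := card_seeded_le G Δ hdeg A (G.neighborFinset v) j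
    have hd : (G.neighborFinset v).card ≤ Δ := hdeg v
    have h1 : (j + 1).factorial * (seededSets G (G.neighborFinset v) A (j + 1)).card ≤
        Δ * (Δ + Δ * (j + 1)) ^ j := h.trans (by gcongr)
    have h2 : ((j + 1).factorial : ℝ) * ((seededSets G (G.neighborFinset v) A (j + 1)).card : ℝ) ≤
        Δ * (Δ + Δ * (j + 1)) ^ j := by exact_mod_cast h1
    have h3 := succ_pow_le_exp_mul_factorial (j + 1)
    have hf : (0 : ℝ) < ((j + 1).factorial : ℝ) := by positivity
    refine le_of_mul_le_mul_left (h2.trans ?_) hf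
    have e1 : (Δ : ℝ) * (Δ + Δ * (j + 1)) ^ j = (Δ : ℝ) ^ (j + 1) * ((j : ℝ) + 2) ^ j := by
      rw [show (Δ : ℝ) + Δ * (j + 1) = Δ * (j + 2) by ring, mul_pow]
      ring
    rw [e1, mul_pow, mul_left_comm, mul_comm ((Δ : ℝ) ^ (j + 1))]
    rw [← mul_assoc]
    gcongr
    rw [Nat.factorial_succ (j + 1)] at h3
    push_cast at h3
    rw [show (j : ℝ) + 1 + 1 = j + 2 by ring, pow_succ ((j : ℝ) + 2)] at h3
    refine le_of_mul_le_mul_right (h3.trans_eq ?_) (show (0 : ℝ) < j + 2 by positivity)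
    ring

/-! ### Extending a fixed set to a random one -/

lemma choose_sub_le (n ℓ : ℕ) (θ : ℝ) (hθ1 : θ ≤ 1) (hθ0 : 0 < θ) (hℓn : ℓ ≤ n)
    (hlt : (ℓ : ℝ) < θ * n + 1) (j : ℕ) (hj : j + 1 ≤ ℓ) :
    ((n - (j + 1)).choose (ℓ - (j + 1)) : ℝ) ≤ n.choose ℓ * ((ℓ : ℝ) / n * (2 * θ) ^ j) := by
  -- `(n - i) binom (n - i - 1) (ℓ - i - 1) = (ℓ - i) binom (n - i) (ℓ - i)`
  have rec_eq : ∀ i, i + 1 ≤ ℓ → ((n : ℝ) - i) * ((n - (i + 1)).choose (ℓ - (i + 1)) : ℝ) =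
      ((n - i).choose (ℓ - i) : ℝ) * ((ℓ : ℝ) - i) := by
    intro i hi
    have h := Nat.add_one_mul_choose_eq (n - (i + 1)) (ℓ - (i + 1))
    rw [show n - (i + 1) + 1 = n - i by omega, show ℓ - (i + 1) + 1 = ℓ - i by omega] at h
    rw [← Nat.cast_sub (by omega : i ≤ n), ← Nat.cast_sub (by omega : i ≤ ℓ)]
    exact_mod_cast h
  induction j with
  | zero =>
    have h := rec_eq 0 hj
    have hn : (0 : ℝ) < n := by exact_mod_cast (by omega : 0 < n)
    simp only [Nat.cast_zero, sub_zero, Nat.sub_zero] at h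
    rw [pow_zero, mul_one, ← mul_div_assoc, le_div_iff₀ hn]
    linarith
  | succ j ih =>
    have h := rec_eq (j + 1) hj
    have hi := ih (by omega)
    have hn : ((j : ℝ) + 1) + 1 ≤ n := by exact_mod_cast (by omega : j + 1 + 1 ≤ n)
    push_cast at h
    have hpos : (0 : ℝ) < n - (j + 1) := by linarith
    have hj0 : (0 : ℝ) ≤ j := by positivity
    have hfac : (ℓ : ℝ) - (j + 1) ≤ 2 * θ * (n - (j + 1)) := by
      nlinarith [mul_nonneg hj0 (sub_nonneg.2 hθ1), mul_nonneg hθ0.le (sub_nonneg.2 hn)]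
    refine le_of_mul_le_mul_left ?_ hpos
    rw [h]
    calc _ ≤ ((n - (j + 1)).choose (ℓ - (j + 1)) : ℝ) * (2 * θ * (n - (j + 1))) := by gcongr
      _ ≤ (n.choose ℓ * ((ℓ : ℝ) / n * (2 * θ) ^ j)) * (2 * θ * (n - (j + 1))) := by gcongr
      _ = _ := by rw [pow_succ]; ring

lemma card_supersets {V : Type} [Fintype V] [DecidableEq V] (T : Finset V) (ℓ : ℕ) :
    ((powersetCard ℓ (univ : Finset V)).filter (fun S => T ⊆ S)).card ≤
      (Fintype.card V - T.card).choose (ℓ - T.card) := by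
  rw [← card_univ, ← card_sdiff_of_subset (subset_univ T), ← card_powersetCard]
  refine card_le_card_of_injOn (fun S => S \ T) ?_ ?_
  · intro S hS
    simp only [coe_filter, mem_powersetCard, Set.mem_ofPred_eq] at hS
    obtain ⟨⟨-, hc⟩, hTS⟩ := hS
    refine mem_coe.2 (mem_powersetCard.2 ⟨sdiff_subset_sdiff (subset_univ S) le_rfl, ?_⟩)
    rw [card_sdiff_of_subset hTS, hc]
  · intro S hS S' hS' h
    simp only [coe_filter, Set.mem_ofPred_eq] at hS hS'
    dsimp only at h
    rw [← sdiff_union_of_subset hS.2, ← sdiff_union_of_subset hS'.2, h]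

/-! ### The union bound -/

lemma seeded_inducedComp {V : Type} [Fintype V] (G : SimpleGraph V) (S : Finset V) (v : V) :
    Seeded G {v} (inducedComp G S v).toFinset := by
  intro t ht
  rw [Set.mem_toFinset] at ht
  obtain ⟨hv, -, ht⟩ := ht
  have hvT : v ∈ inducedComp G S v := ⟨hv, hv, .refl⟩
  refine ⟨v, mem_singleton_self v, Set.mem_toFinset.2 hvT, ?_⟩
  induction ht with
  | refl => exact .refl
  | tail hx hxy ih => exact ih.tail ⟨hxy.1, Set.mem_toFinset.2 ⟨hv, hxy.2, hx.tail hxy⟩⟩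

/-- **Counting linear-size blocks with a prescribed component size** (Lemma 4.3):
if `S` is a uniformly random subset of `V` of size `ℓ = ⌈θn⌉`, the probability that the
connected component of `v` in `G[S]` has exactly `k` vertices is at most
`(ℓ/n)·(2eΔθ)^{k−1}`. -/
theorem component_size_probability_bound
    {V : Type} [Fintype V] [DecidableEq V]
    (G : SimpleGraph V) [DecidableRel G.Adj] (Δ : ℕ)
    (hdeg : ∀ v : V, G.degree v ≤ Δ)
    (θ : ℝ) (hθ0 : 0 < θ) (hθ1 : θ ≤ 1)
    (ℓ : ℕ) (hℓ : ℓ = ⌈θ * (Fintype.card V : ℝ)⌉₊) (hℓn : ℓ ≤ Fintype.card V)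
    (v : V) (k : ℕ) (hk : 1 ≤ k) :
    (((Finset.powersetCard ℓ (Finset.univ : Finset V)).filter
          (fun S => (inducedComp G S v).ncard = k)).card : ℝ) /
        ((Fintype.card V).choose ℓ : ℝ) ≤
      ((ℓ : ℝ) / (Fintype.card V : ℝ)) *
        (2 * Real.exp 1 * (Δ : ℝ) * θ) ^ (k - 1) := by
  obtain ⟨j, rfl⟩ : ∃ j, k = j + 1 := ⟨k - 1, by omega⟩
  set F := (powersetCard ℓ (univ : Finset V)).filter
    (fun S => (inducedComp G S v).ncard = j + 1) with hF
  have hchoose : (0 : ℝ) < ((Fintype.card V).choose ℓ : ℝ) := by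
    exact_mod_cast Nat.choose_pos hℓn
  have hlt : (ℓ : ℝ) < θ * Fintype.card V + 1 := by
    rw [hℓ]
    exact Nat.ceil_lt_add_one (by positivity)
  rw [div_le_iff₀ hchoose, Nat.add_sub_cancel]
  have memF : ∀ S ∈ F, S.card = ℓ ∧ v ∈ (inducedComp G S v).toFinset ∧
      (inducedComp G S v).toFinset ⊆ S ∧ (inducedComp G S v).toFinset.card = j + 1 := by
    intro S hS
    obtain ⟨hS1, hS2⟩ := mem_filter.1 hS
    rw [Set.ncard_eq_toFinset_card'] at hS2
    refine ⟨(mem_powersetCard.1 hS1).2, ?_, fun x hx => (Set.mem_toFinset.1 hx).2.1, hS2⟩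
    obtain ⟨x, hx⟩ := card_pos.1 (by omega : 0 < (inducedComp G S v).toFinset.card)
    have hvS := (Set.mem_toFinset.1 hx).1
    exact Set.mem_toFinset.2 ⟨hvS, hvS, .refl⟩
  rcases Nat.lt_or_ge ℓ (j + 1) with hjℓ | hjℓ
  · have : F = ∅ := by
      refine eq_empty_of_forall_notMem fun S hS => ?_
      obtain ⟨h1, -, h2, h3⟩ := memF S hS
      have := card_le_card h2
      omega
    rw [this, card_empty, Nat.cast_zero]
    positivity
  · -- Group the sets `S` by the component of `v` with `v` removed.
    have hmap : ∀ S ∈ F, (inducedComp G S v).toFinset.erase v ∈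
        seededSets G (G.neighborFinset v) univ j := by
      intro S hS
      obtain ⟨-, h2, -, h4⟩ := memF S hS
      refine mem_seededSets.2 ⟨⟨subset_univ _, ?_⟩, ?_⟩
      · rw [card_erase_of_mem h2, h4]
        rfl
      · have := (seeded_inducedComp G S v).erase v
        simpa using this
    have hcard : F.card ≤ (Fintype.card V - (j + 1)).choose (ℓ - (j + 1)) *
        (seededSets G (G.neighborFinset v) univ j).card := by
      refine card_le_mul_card_image_of_maps_to hmap _ fun T' _ => ?_
      rcases (F.filter
        (fun S => (inducedComp G S v).toFinset.erase v = T')).eq_empty_or_nonempty with he | hne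
      · rw [he]
        simp
      · obtain ⟨S₀, hS₀⟩ := hne
        obtain ⟨hS₀F, hS₀T⟩ := mem_filter.1 hS₀
        obtain ⟨-, h2, -, h4⟩ := memF S₀ hS₀F
        have hT : (insert v T').card = j + 1 := by
          rw [← hS₀T, insert_erase h2, h4]
        have hsup := card_supersets (insert v T') ℓ
        rw [hT] at hsup
        refine le_trans (card_le_card fun S hS => ?_) hsup
        obtain ⟨hSF, hST⟩ := mem_filter.1 hS
        obtain ⟨-, g2, g3, -⟩ := memF S hSF
        refine mem_filter.2 ⟨(mem_filter.1 hSF).1, ?_⟩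
        rw [← hST, insert_erase g2]
        exact g3
    have hN := card_seeded_neighbors_le G Δ hdeg univ v j
    have hC := choose_sub_le _ ℓ θ hθ1 hθ0 hℓn hlt j hjℓ
    calc (F.card : ℝ) ≤ ((Fintype.card V - (j + 1)).choose (ℓ - (j + 1)) : ℝ) *
          ((seededSets G (G.neighborFinset v) univ j).card : ℝ) := by exact_mod_cast hcard
      _ ≤ ((Fintype.card V).choose ℓ * ((ℓ : ℝ) / Fintype.card V * (2 * θ) ^ j)) *
          (Real.exp 1 * Δ) ^ j := by gcongr
      _ = _ := by
        rw [show 2 * Real.exp 1 * (Δ : ℝ) * θ = (2 * θ) * (Real.exp 1 * Δ) by ring, mul_pow]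
        ring
end

section
/- In the two-level weighted simplicial complex setting, suppose ζ ∈ ℝ is such that the local walk P_∅ satisfies the Poincaré inequality E_{P_∅}(g,g) ≥ (1−ζ)·Var_{π₁}(g) for every g : U → ℝ (equivalently, the second-largest eigenvalue of P_∅ is at most ζ). Then for every f : X₂ → ℝ≥0 with π₂(f) > 0, one has Ent_{π₂}(f) − 2·Ent_{π₁}(f^{(1)}) ≥ −ζ·Var_{π₁}(f^{(1)})/π₁(f^{(1)}). -/
/-!
Write `W i j` for `π₂ {i, j}` on ordered pairs spanning an edge (and `0` otherwise), `a i j` for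
`f {i, j}`, `g = f⁽¹⁾`, and `m = π₂(f)`. Every edge is counted by two ordered pairs
(`sum_pairs_eq_two_mul`), so that `π₁(g) = m` and
`Ent_{π₂}(f) − 2 Ent_{π₁}(g) = ½ ∑ W i j * a i j * log (a i j * m / (g i * g j))`.
The inequality `a log (a / b) ≥ a − b` with `b = g i * g j / m` bounds this below by
`m − (1 / m) * ½ ∑ W i j * g i * g j` (`entropy_term_ge`). Expanding the square in the Dirichlet
form gives `E(g, g) = π₁(g²) − ½ ∑ W i j * g i * g j`, so the Poincaré inequality bounds the
correlation sum by `m² + ζ Var(g)`, and the claim follows (`weighted_entropy_ge`).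
-/

/-- Each two-element set is `{i, j}` for exactly two ordered pairs `(i, j)`. -/
lemma sum_pairs_eq_two_mul {U : Type} [Fintype U] [DecidableEq U]
    (X : Finset (Finset U)) (hcard : ∀ s ∈ X, s.card = 2) (F : Finset U → ℝ) :
    ∑ i : U, ∑ j : U, (if {i, j} ∈ X then F {i, j} else 0) = 2 * ∑ s ∈ X, F s := by
  have h1 : ∀ i j : U, (if {i, j} ∈ X then F {i, j} else 0) =
      ∑ s ∈ X, if ({i, j} : Finset U) = s then F s else 0 := by
    intro i j
    rw [Finset.sum_ite_eq]
  simp_rw [h1]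
  rw [← Fintype.sum_prod_type'
    (f := fun i j : U => ∑ s ∈ X, if ({i, j} : Finset U) = s then F s else 0),
    Finset.sum_comm, Finset.mul_sum]
  refine Finset.sum_congr rfl fun s hs => ?_
  obtain ⟨a, b, hab, rfl⟩ := Finset.card_eq_two.mp (hcard s hs)
  rw [← Finset.sum_filter, Finset.sum_const]
  have h2 : (Finset.univ.filter fun x : U × U => ({x.1, x.2} : Finset U) = {a, b}) =
      {(a, b), (b, a)} := by
    ext ⟨x, y⟩
    simp only [Finset.mem_filter, Finset.mem_univ, true_and, Finset.mem_insert,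
      Finset.mem_singleton, Prod.mk.injEq]
    constructor
    · intro h
      have hx : x ∈ ({a, b} : Finset U) := by rw [← h]; simp
      have hy : y ∈ ({a, b} : Finset U) := by rw [← h]; simp
      have ha : a ∈ ({x, y} : Finset U) := by rw [h]; simp
      have hb : b ∈ ({x, y} : Finset U) := by rw [h]; simp
      simp only [Finset.mem_insert, Finset.mem_singleton] at hx hy ha hb
      grind
    · rintro (⟨rfl, rfl⟩ | ⟨rfl, rfl⟩)
      · rfl
      · exact Finset.pair_comm _ _
  rw [h2, Finset.card_pair (by simp [hab]), nsmul_eq_mul]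
  norm_num

/-- The bound `a log (a / b) ≥ a − b` for `b = x y / m`, with the logarithm split up. -/
lemma entropy_term_ge {a x y m : ℝ} (hm : 0 < m) (ha : 0 ≤ a) (hx : 0 ≤ x) (hy : 0 ≤ y)
    (hx' : 0 < a → 0 < x) (hy' : 0 < a → 0 < y) :
    a - x * y / m ≤
      a * Real.log (a / m) - a * Real.log (x / m) - a * Real.log (y / m) := by
  rcases ha.eq_or_lt with rfl | ha
  · have : 0 ≤ x * y / m := by positivity
    simpa using this
  have hx := hx' ha
  have hy := hy' ha
  have h := Real.log_le_sub_one_of_pos (x := x * y / m / a) (by positivity)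
  have e : Real.log (x * y / m / a) =
      -(Real.log (a / m) - Real.log (x / m) - Real.log (y / m)) := by
    rw [Real.log_div (by positivity) ha.ne', Real.log_div (by positivity) hm.ne',
      Real.log_mul hx.ne' hy.ne', Real.log_div ha.ne' hm.ne', Real.log_div hx.ne' hm.ne',
      Real.log_div hy.ne' hm.ne']
    ring
  rw [e] at h
  have h2 := mul_le_mul_of_nonneg_left h ha.le
  have e2 : a * (x * y / m / a - 1) = x * y / m - a := by
    field_simp
  rw [e2] at h2
  linarith

/-- The inequality for a symmetric nonnegative weight matrix `W` and a symmetric nonnegative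
function `a` on ordered pairs; `p` and `g` play the roles of `π₁` and `f⁽¹⁾`. -/
lemma weighted_entropy_ge {U : Type} [Fintype U] (W a : U → U → ℝ) (p g : U → ℝ) (m ζ : ℝ)
    (hW : ∀ i j, 0 ≤ W i j) (ha : ∀ i j, 0 ≤ a i j)
    (hWs : ∀ i j, W i j = W j i) (has : ∀ i j, a i j = a j i)
    (hp : ∀ i, p i = (1 / 2) * ∑ j, W i j) (hp0 : ∀ i, 0 < p i)
    (hg : ∀ i, 2 * p i * g i = ∑ j, W i j * a i j)
    (hm : 0 < m) (hWa : ∑ i, ∑ j, W i j * a i j = 2 * m)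
    (hP : (1 / 2) * ∑ i, ∑ j, (1 / 2) * W i j * (g i - g j) ^ 2 ≥
      (1 - ζ) * ((∑ i, p i * g i ^ 2) - (∑ i, p i * g i) ^ 2)) :
    (1 / 2) * (∑ i, ∑ j, W i j * a i j * Real.log (a i j / m)) -
        2 * (∑ i, p i * g i * Real.log (g i / ∑ j, p j * g j)) ≥
      -ζ * (((∑ i, p i * g i ^ 2) - (∑ i, p i * g i) ^ 2) / ∑ i, p i * g i) := by
  have hpg : ∑ i, p i * g i = m := by
    have : ∑ i, 2 * p i * g i = 2 * m := by rw [← hWa]; exact Finset.sum_congr rfl fun i _ => hg i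
    simp_rw [mul_assoc] at this
    rw [← Finset.mul_sum] at this
    linarith
  have hg0 : ∀ i, 0 ≤ g i := by
    intro i
    have h : 0 ≤ 2 * p i * g i := by
      rw [hg]; exact Finset.sum_nonneg fun j _ => mul_nonneg (hW i j) (ha i j)
    exact nonneg_of_mul_nonneg_right h (by linarith [hp0 i])
  have hgpos : ∀ i j, 0 < W i j → 0 < a i j → 0 < g i := by
    intro i j hw h
    have h : 0 < 2 * p i * g i := by
      rw [hg]
      exact (mul_pos hw h).trans_le (Finset.single_le_sum
        (f := fun j => W i j * a i j)
        (fun j _ => mul_nonneg (hW i j) (ha i j)) (Finset.mem_univ j))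
    exact pos_of_mul_pos_right h (by linarith [hp0 i])
  rw [hpg] at hP ⊢
  set S := ∑ i, ∑ j, W i j * (g i * g j) with hS
  set Q := ∑ i, p i * g i ^ 2 with hQ
  set T := ∑ i, p i * g i * Real.log (g i / m) with hT
  set A := ∑ i, ∑ j, W i j * a i j * Real.log (a i j / m) with hA
  have hQ1 : ∑ i, ∑ j, W i j * g i ^ 2 = 2 * Q := by
    rw [hQ, Finset.mul_sum]
    refine Finset.sum_congr rfl fun i _ => ?_
    rw [← Finset.sum_mul, hp]; ring
  have hQ2 : ∑ i, ∑ j, W i j * g j ^ 2 = 2 * Q := by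
    rw [Finset.sum_comm, ← hQ1]
    exact Finset.sum_congr rfl fun i _ => Finset.sum_congr rfl fun j _ => by rw [hWs]
  have hT1 : ∑ i, ∑ j, W i j * a i j * Real.log (g i / m) = 2 * T := by
    rw [hT, Finset.mul_sum]
    refine Finset.sum_congr rfl fun i _ => ?_
    rw [← Finset.sum_mul, ← hg]; ring
  have hT2 : ∑ i, ∑ j, W i j * a i j * Real.log (g j / m) = 2 * T := by
    rw [Finset.sum_comm, ← hT1]
    exact Finset.sum_congr rfl fun i _ => Finset.sum_congr rfl fun j _ => by rw [hWs, has]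
  have hD : ∑ i, ∑ j, (1 / 2) * W i j * (g i - g j) ^ 2 = 2 * Q - S := by
    have : ∀ i j, (1 / 2) * W i j * (g i - g j) ^ 2 =
        (1 / 2) * (W i j * g i ^ 2) + (1 / 2) * (W i j * g j ^ 2) - W i j * (g i * g j) := by
      intro i j; ring
    simp_rw [this, Finset.sum_sub_distrib, Finset.sum_add_distrib, ← Finset.mul_sum]
    rw [hQ1, hQ2]; ring
  have hE : 2 * m - S / m ≤ A - 2 * T - 2 * T := by
    rw [← hWa, hS, hA]
    nth_rewrite 1 [← hT1]
    rw [← hT2]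
    simp_rw [Finset.sum_div, ← Finset.sum_sub_distrib]
    refine Finset.sum_le_sum fun i _ => Finset.sum_le_sum fun j _ => ?_
    rcases (hW i j).eq_or_lt with hw | hw
    · simp [← hw]
    have h := entropy_term_ge hm (ha i j) (hg0 i) (hg0 j) (hgpos i j hw)
      (fun h => hgpos j i (hWs i j ▸ hw) (has i j ▸ h))
    have h2 := mul_le_mul_of_nonneg_left h hw.le
    calc _ = W i j * (a i j - g i * g j / m) := by ring
      _ ≤ _ := h2
      _ = _ := by ring
  rw [hD] at hP
  have hS' : S / m ≤ 2 * (m + ζ * ((Q - m ^ 2) / m)) := by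
    rw [div_le_iff₀ hm]
    have : 2 * (m + ζ * ((Q - m ^ 2) / m)) * m = 2 * (m ^ 2 + ζ * (Q - m ^ 2)) := by
      field_simp
    rw [this]
    linarith
  linarith

/-- **Entropy versus variance under local spectral expansion** (Lemma 5.6): in the
two-level weighted simplicial complex setting, if the local walk `P` satisfies the
Poincaré inequality with constant `1 − ζ`, then for every `f : X₂ → ℝ≥0` with
`π₂(f) > 0`,
`Ent_{π₂}(f) − 2·Ent_{π₁}(f⁽¹⁾) ≥ −ζ·Var_{π₁}(f⁽¹⁾)/π₁(f⁽¹⁾)`. -/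
theorem ent_two_level_ge_of_local_spectral_gap
    (U : Type) [Fintype U] [DecidableEq U]
    (X₂ : Finset (Finset U)) (hX₂ : X₂.Nonempty)
    (hcard : ∀ s ∈ X₂, s.card = 2)
    (hcover : ∀ i : U, ∃ s ∈ X₂, i ∈ s)
    (π₂ : Finset U → ℝ) (hpos : ∀ s ∈ X₂, 0 < π₂ s)
    (hsum : ∑ s ∈ X₂, π₂ s = 1)
    (π₁ : U → ℝ)
    (hπ₁ : ∀ i, π₁ i = (1 / 2) * ∑ j : U, if {i, j} ∈ X₂ then π₂ {i, j} else 0)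
    (P : U → U → ℝ)
    (hP : ∀ i j, P i j = if {i, j} ∈ X₂ then π₂ {i, j} / (2 * π₁ i) else 0)
    (ζ : ℝ)
    (hPoincare : ∀ g : U → ℝ,
      (1 / 2) * ∑ i : U, ∑ j : U, π₁ i * P i j * (g i - g j) ^ 2 ≥
        (1 - ζ) * ((∑ i, π₁ i * g i ^ 2) - (∑ i, π₁ i * g i) ^ 2))
    (f : Finset U → ℝ) (hf : ∀ s ∈ X₂, 0 ≤ f s)
    (hfpos : 0 < ∑ s ∈ X₂, π₂ s * f s)
    (f1 : U → ℝ)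
    (hf1 : ∀ i, f1 i =
      (2 * π₁ i)⁻¹ * ∑ j : U, if {i, j} ∈ X₂ then π₂ {i, j} * f {i, j} else 0) :
    (∑ s ∈ X₂, π₂ s * f s * Real.log (f s / ∑ t ∈ X₂, π₂ t * f t)) -
        2 * (∑ i : U, π₁ i * f1 i * Real.log (f1 i / ∑ j, π₁ j * f1 j)) ≥
      -ζ * (((∑ i, π₁ i * f1 i ^ 2) - (∑ i, π₁ i * f1 i) ^ 2) /
        ∑ i, π₁ i * f1 i) := by
  -- Every vertex lies in an edge, so its weight is positive.
  have hp0 : ∀ i, 0 < π₁ i := by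
    intro i
    obtain ⟨s, hs, his⟩ := hcover i
    obtain ⟨j, hj⟩ : ∃ j, s = {i, j} := by
      obtain ⟨a, b, -, rfl⟩ := Finset.card_eq_two.mp (hcard s hs)
      rcases Finset.mem_insert.mp his with rfl | h
      · exact ⟨b, rfl⟩
      · rw [Finset.mem_singleton.mp h]
        exact ⟨a, Finset.pair_comm _ _⟩
    subst hj
    rw [hπ₁]
    have := Finset.single_le_sum
      (f := fun j => if ({i, j} : Finset U) ∈ X₂ then π₂ {i, j} else 0)
      (fun k _ => by
        split_ifs with h
        · exact (hpos _ h).le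
        · exact le_rfl) (Finset.mem_univ j)
    simp only [hs, if_true] at this
    linarith [hpos _ hs]
  have key := weighted_entropy_ge
    (fun i j => if ({i, j} : Finset U) ∈ X₂ then π₂ {i, j} else 0)
    (fun i j => if ({i, j} : Finset U) ∈ X₂ then f {i, j} else 0) π₁ f1
    (∑ s ∈ X₂, π₂ s * f s) ζ
    (fun i j => by
      split_ifs with h
      · exact (hpos _ h).le
      · exact le_rfl)
    (fun i j => by
      split_ifs with h
      · exact hf _ h
      · exact le_rfl)
    (fun i j => by simp only [Finset.pair_comm i j])
    (fun i j => by simp only [Finset.pair_comm i j])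
    hπ₁ hp0
    (fun i => by
      have := (hp0 i).ne'
      rw [hf1, mul_inv_cancel_left₀ (by positivity)]
      refine Finset.sum_congr rfl fun j _ => ?_
      split_ifs <;> simp)
    hfpos
    (by
      rw [← sum_pairs_eq_two_mul X₂ hcard]
      refine Finset.sum_congr rfl fun i _ => Finset.sum_congr rfl fun j _ => ?_
      split_ifs <;> simp)
    (by
      refine (hPoincare f1).trans_eq ?_
      congr 1
      refine Finset.sum_congr rfl fun i _ => Finset.sum_congr rfl fun j _ => ?_
      have := (hp0 i).ne'
      rw [hP]
      split_ifs
      · field_simp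
      · simp)
  convert key using 2
  have h := sum_pairs_eq_two_mul X₂ hcard
    (fun s => π₂ s * f s * Real.log (f s / ∑ t ∈ X₂, π₂ t * f t))
  have h' : ∀ x y z : ℝ, x = 2 * y → x = z → y = 1 / 2 * z := by
    intro x y z h1 h2; linarith
  refine h' _ _ _ h ?_
  refine Finset.sum_congr rfl fun i _ => Finset.sum_congr rfl fun j _ => ?_
  split_ifs <;> simp
end

section
/- Let π be a probability distribution on a finite set Ω, let f : Ω → ℝ≥0 with π(f) > 0, and let c ≥ 1 be such that f(x) ≤ c·π(f) for all x ∈ Ω. Then Var_π(f)/π(f) ≤ 4c²·Ent_π(f). -/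
/-!
With `m = π(f)` and `t = f x / m ∈ [0, c]`, both sides are averages of functions of `t`:
`Var_π(f) / m = m · π((t - 1)²)` and, because `π(t) = 1`, `Ent_π(f) = m · π(t log t - t + 1)`.
It therefore suffices to prove the pointwise bound `(t - 1)² ≤ 4c² (t log t - t + 1)` on `[0, c]`.
Writing `t = s²`, the inequality `log s ≥ 1 - 1/s` gives `t log t - t + 1 ≥ (s - 1)²`, whereas
`(t - 1)² = (s + 1)² (s - 1)²` with `s + 1 ≤ 2c`.
-/

/-- The pointwise comparison of the integrands of variance and entropy, normalised to mean one. -/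
lemma sub_one_sq_le_entropy_integrand {c t : ℝ} (hc : 1 ≤ c) (ht : 0 ≤ t) (htc : t ≤ c) :
    (t - 1) ^ 2 ≤ 4 * c ^ 2 * (t * Real.log t - t + 1) := by
  obtain ⟨s, hs, rfl⟩ : ∃ s : ℝ, 0 ≤ s ∧ t = s ^ 2 :=
    ⟨√t, Real.sqrt_nonneg t, (Real.sq_sqrt ht).symm⟩
  have hslog : s - 1 ≤ s * Real.log s := by
    rcases hs.eq_or_lt with rfl | hpos
    · simp
    · have h := mul_le_mul_of_nonneg_left (Real.one_sub_inv_le_log_of_pos hpos) hs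
      rwa [mul_sub, mul_one, mul_inv_cancel₀ hpos.ne'] at h
  have hent : (s - 1) ^ 2 ≤ s ^ 2 * Real.log (s ^ 2) - s ^ 2 + 1 := by
    rw [Real.log_pow]
    push_cast
    nlinarith [mul_le_mul_of_nonneg_left hslog hs]
  have hsc : s ≤ c := by nlinarith
  have hsq : (s + 1) ^ 2 ≤ 4 * c ^ 2 := by nlinarith
  calc (s ^ 2 - 1) ^ 2 = (s + 1) ^ 2 * (s - 1) ^ 2 := by ring
    _ ≤ 4 * c ^ 2 * (s ^ 2 * Real.log (s ^ 2) - s ^ 2 + 1) := by gcongr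

/-- **Variance versus entropy for balanced functions.**
Let `π` be a probability distribution on a finite set `Ω`, `f : Ω → ℝ≥0` with `π(f) > 0`,
and `c ≥ 1` with `f x ≤ c·π(f)` for all `x`.  Then `Var_π(f)/π(f) ≤ 4c²·Ent_π(f)`. -/
theorem var_div_mean_le_four_csq_ent
    (Ω : Type) [Fintype Ω] (π : Ω → ℝ)
    (hπ0 : ∀ x, 0 ≤ π x) (hπ1 : ∑ x, π x = 1)
    (f : Ω → ℝ) (hf : ∀ x, 0 ≤ f x)
    (hmean : 0 < ∑ x, π x * f x)
    (c : ℝ) (hc : 1 ≤ c)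
    (hbal : ∀ x, f x ≤ c * ∑ y, π y * f y) :
    ((∑ x, π x * f x ^ 2) - (∑ x, π x * f x) ^ 2) / (∑ x, π x * f x) ≤
      4 * c ^ 2 * ∑ x, π x * f x * Real.log (f x / ∑ y, π y * f y) := by
  set m := ∑ x, π x * f x with hm
  have hpt : ∀ x, π x * f x ^ 2 - 2 * m * (π x * f x) + m ^ 2 * π x ≤
      4 * c ^ 2 * m * (π x * f x * Real.log (f x / m) - π x * f x + m * π x) := by
    intro x
    have h := mul_le_mul_of_nonneg_left
      (sub_one_sq_le_entropy_integrand hc (div_nonneg (hf x) hmean.le)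
        ((div_le_iff₀ hmean).2 (hbal x)))
      (mul_nonneg (sq_nonneg m) (hπ0 x))
    have hfx : f x = f x / m * m := by field_simp
    generalize f x / m = t at h hfx ⊢
    rw [hfx]
    linarith
  have hsum := Finset.sum_le_sum fun x (_ : x ∈ Finset.univ) => hpt x
  simp only [Finset.sum_add_distrib, Finset.sum_sub_distrib, ← Finset.mul_sum, ← hm, hπ1] at hsum
  rw [div_le_iff₀ hmean]
  linarith
end

section
/- In the two-level weighted simplicial complex setting, suppose ρ ∈ ℝ satisfies the standard log-Sobolev inequality ρ·Ent_{π₂}(g) ≤ E_{P∨}(√g, √g) for every g : X₂ → ℝ≥0, where P∨ is the down-up walk on X₂. Then for every f : X₂ → ℝ≥0, one has Ent_{π₁}(f^{(1)}) ≤ (1−ρ)·Ent_{π₂}(f). -/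
/-!
Write `S_i` for the family of edges of `X₂` containing `i`, and `w_i = 2 π₁ i` for its total mass.
Every edge has two endpoints, so summing over `i` and then over `S_i` counts each edge twice; this
gives `π₁(f⁽¹⁾) = π₂(f)` and the chain rule
`Ent_{π₂}(f) - Ent_{π₁}(f⁽¹⁾) = (1/2) ∑ᵢ ∑_{s ∈ S_i} π₂ s * f s * log (f s / f⁽¹⁾ i)`,
while the Dirichlet form of `√f` is `(1/2) ∑ᵢ w_i Var_i(√f)`, the variance being taken under the
conditional distribution `π₂ / w_i` on `S_i`. The claim follows from the log-Sobolev inequality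
for `g = f` and the inequality `Var(√f) ≤ Ent(f)`, applied to each conditional distribution. The
latter is a consequence of `log x ≤ x - 1` at `x = √(μ / f)`, with `μ` the mean of `f`
(`sqrt_le_mul_log_sub`), followed by completing a square (`local_ent_ge_var`).
-/

open Finset

/-- Summing over the neighbours `j` of `i` is summing over the edges containing `i`. The term
`j = i` vanishes, since `{i, i}` is a singleton and hence not an edge. -/
lemma sum_neighbors_eq_sum_edges {U : Type} [Fintype U] [DecidableEq U]
    (X : Finset (Finset U)) (hcard : ∀ s ∈ X, s.card = 2) (h : Finset U → ℝ) (i : U) :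
    (∑ j : U, if {i, j} ∈ X then h {i, j} else 0) = ∑ s ∈ X with i ∈ s, h s := by
  rw [← Finset.sum_filter]
  have hne : ∀ j, ({i, j} : Finset U) ∈ X → i ≠ j := by
    rintro j hj rfl
    simpa using hcard _ hj
  refine Finset.sum_bij (fun j _ => {i, j}) ?_ ?_ ?_ ?_
  · intro j hj
    simpa using hj
  · intro a ha b hb hab
    have ha' := hne a (by simpa using ha)
    have : a ∈ ({i, b} : Finset U) := by rw [← hab]; simp
    simp only [mem_insert, mem_singleton] at this
    exact this.resolve_left (Ne.symm ha')
  · intro s hs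
    obtain ⟨hsX, his⟩ := Finset.mem_filter.1 hs
    obtain ⟨a, b, -, rfl⟩ := Finset.card_eq_two.1 (hcard s hsX)
    simp only [mem_insert, mem_singleton] at his
    rcases his with rfl | rfl
    · exact ⟨b, by simpa using hsX, rfl⟩
    · exact ⟨a, by simpa [Finset.pair_comm] using hsX, Finset.pair_comm _ _⟩
  · intros; rfl

/-- Each edge is counted once from each of its two endpoints. -/
lemma sum_sum_edges {U : Type} [Fintype U] [DecidableEq U]
    (X : Finset (Finset U)) (hcard : ∀ s ∈ X, s.card = 2) (h : Finset U → ℝ) :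
    ∑ i : U, ∑ s ∈ X with i ∈ s, h s = 2 * ∑ s ∈ X, h s := by
  simp_rw [Finset.sum_filter]
  rw [Finset.sum_comm, Finset.mul_sum]
  refine Finset.sum_congr rfl fun s hs => ?_
  rw [← Finset.sum_filter]
  simp [hcard s hs]

/-- Pointwise form of `Var(√f) ≤ Ent(f)`, from `log x ≤ x - 1` at `x = √(b / a)`. The
normalization `m` cancels from the difference of logarithms. -/
lemma sqrt_le_mul_log_sub {a b m : ℝ} (ha : 0 ≤ a) (hb : 0 < a → 0 < b) (hm : 0 < a → 0 < m) :
    2 * (a - √b * √a) ≤ a * (Real.log (a / m) - Real.log (b / m)) := by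
  rcases ha.eq_or_lt with rfl | h
  · simp
  have hb := hb h
  have hm := hm h
  have h1 := Real.log_le_sub_one_of_pos (div_pos (Real.sqrt_pos.2 hb) (Real.sqrt_pos.2 h))
  rw [Real.log_div (Real.sqrt_pos.2 hb).ne' (Real.sqrt_pos.2 h).ne', Real.log_sqrt hb.le,
    Real.log_sqrt h.le] at h1
  rw [Real.log_div h.ne' hm.ne', Real.log_div hb.ne' hm.ne']
  have h2 : a * (√b / √a) = √b * √a := by
    have := (Real.sqrt_pos.2 h).ne'
    field_simp
    rw [Real.sq_sqrt h.le]
  nlinarith [mul_le_mul_of_nonneg_left h1 h.le]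

/-- When `w` is the total mass of `p`, so that `b` is the mean of `f` under the probability
distribution `p / w`, this is `w` times the inequality `Var(√f) ≤ Ent(f)` for that distribution. The
normalization of `w` itself is not needed, only the relation `hb`. -/
lemma local_ent_ge_var {ι : Type} (S : Finset ι) (p f : ι → ℝ) (hp : ∀ s ∈ S, 0 < p s)
    (hf : ∀ s ∈ S, 0 ≤ f s) {w b m : ℝ} (hw : 0 < w) (hb : w * b = ∑ s ∈ S, p s * f s)
    (hm : ∀ s ∈ S, 0 < f s → 0 < m) :
    ∑ s ∈ S, p s * f s - (∑ s ∈ S, p s * √(f s)) ^ 2 / w ≤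
      ∑ s ∈ S, p s * f s * (Real.log (f s / m) - Real.log (b / m)) := by
  have hnn : ∀ s ∈ S, 0 ≤ p s * f s := fun s hs => mul_nonneg (hp s hs).le (hf s hs)
  have hb0 : 0 ≤ b := by
    have : 0 ≤ w * b := hb ▸ Finset.sum_nonneg hnn
    exact nonneg_of_mul_nonneg_right this hw
  have hbpos : ∀ s ∈ S, 0 < f s → 0 < b := by
    intro s hs h
    have h1 : 0 < w * b :=
      hb ▸ (mul_pos (hp s hs) h).trans_le (Finset.single_le_sum hnn hs)
    exact pos_of_mul_pos_right h1 hw.le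
  have key : ∑ s ∈ S, p s * (2 * (f s - √b * √(f s))) ≤
      ∑ s ∈ S, p s * f s * (Real.log (f s / m) - Real.log (b / m)) := by
    refine Finset.sum_le_sum fun s hs => ?_
    rw [mul_assoc]
    exact mul_le_mul_of_nonneg_left
      (sqrt_le_mul_log_sub (hf s hs) (hbpos s hs) (hm s hs)) (hp s hs).le
  refine le_trans ?_ key
  have e : ∑ s ∈ S, p s * (2 * (f s - √b * √(f s))) =
      2 * ∑ s ∈ S, p s * f s - 2 * √b * ∑ s ∈ S, p s * √(f s) := by
    rw [Finset.mul_sum, Finset.mul_sum, ← Finset.sum_sub_distrib]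
    exact Finset.sum_congr rfl fun s _ => by ring
  rw [e, ← hb]
  generalize ∑ s ∈ S, p s * √(f s) = q
  have hsq : 0 ≤ (w * √b - q) ^ 2 / w := by positivity
  have e2 : (w * √b - q) ^ 2 / w = w * b - 2 * √b * q + q ^ 2 / w := by
    have h : ∀ r : ℝ, (w * r - q) ^ 2 / w = w * r ^ 2 - 2 * r * q + q ^ 2 / w := by
      intro r
      field_simp
      ring
    rw [h, Real.sq_sqrt hb0]
  linarith

/-- The weighted sum of squared differences is twice (mass times second moment minus square
of the first moment). -/
lemma sum_sum_sq_sub {ι : Type} (S : Finset ι) (p r : ι → ℝ) :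
    ∑ s ∈ S, ∑ t ∈ S, p s * p t * (r s - r t) ^ 2 =
      2 * ((∑ s ∈ S, p s) * ∑ s ∈ S, p s * r s ^ 2 - (∑ s ∈ S, p s * r s) ^ 2) := by
  have h : ∀ s t, p s * p t * (r s - r t) ^ 2 =
      (p s * r s ^ 2) * p t + p s * (p t * r t ^ 2) - 2 * ((p s * r s) * (p t * r t)) := by
    intros; ring
  simp_rw [h, Finset.sum_sub_distrib, Finset.sum_add_distrib, ← Finset.mul_sum,
    ← Finset.sum_mul]
  ring

/-- A down-up step passes through the vertex `i` that is kept, so the Dirichlet form is a sum over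
`i` of sums over pairs of edges through `i`. -/
lemma dirichlet_decomp {U : Type} [Fintype U] [DecidableEq U]
    (X : Finset (Finset U)) (p r : Finset U → ℝ) (w : U → ℝ) (P : Finset U → Finset U → ℝ)
    (hP : ∀ s t, P s t = if t ∈ X then (1 / 2) * ∑ i ∈ s ∩ t, p t / w i else 0) :
    ∑ s ∈ X, ∑ t ∈ X, p s * P s t * (r s - r t) ^ 2 =
      (1 / 2) * ∑ i, (∑ s ∈ X with i ∈ s, ∑ t ∈ X with i ∈ t,
        p s * p t * (r s - r t) ^ 2) / w i := by
  have h : ∀ s ∈ X, ∀ t ∈ X, p s * P s t * (r s - r t) ^ 2 =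
      ∑ i, if i ∈ s then (if i ∈ t then (1 / 2) * (p s * p t * (r s - r t) ^ 2 / w i) else 0)
        else 0 := by
    intro s _ t ht
    have e : s ∩ t = Finset.univ.filter (fun i => i ∈ s ∧ i ∈ t) := by ext; simp
    simp_rw [← ite_and]
    rw [hP, if_pos ht, ← Finset.sum_filter, ← e, Finset.mul_sum, Finset.mul_sum, Finset.sum_mul]
    exact Finset.sum_congr rfl fun i _ => by ring
  rw [Finset.sum_congr rfl fun s hs => Finset.sum_congr rfl (h s hs)]
  simp_rw [Finset.sum_comm (s := X) (t := Finset.univ)]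
  rw [Finset.mul_sum]
  refine Finset.sum_congr rfl fun i _ => ?_
  rw [Finset.sum_filter, Finset.sum_div, Finset.mul_sum]
  refine Finset.sum_congr rfl fun s _ => ?_
  by_cases hs : i ∈ s
  · simp only [hs, if_true]
    rw [Finset.sum_filter, Finset.sum_div, Finset.mul_sum]
    exact Finset.sum_congr rfl fun t _ => by split_ifs <;> simp
  · simp [hs]

/-- **Entropy contraction from the standard log-Sobolev inequality of the down-up walk**
(Lemma 5.7): in the two-level weighted simplicial complex setting, if the down-up walk
`P∨` satisfies the standard log-Sobolev inequality with constant `ρ`, then for every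
`f : X₂ → ℝ≥0`, `Ent_{π₁}(f⁽¹⁾) ≤ (1 − ρ)·Ent_{π₂}(f)`. -/
theorem ent_contraction_of_logSobolev
    (U : Type) [Fintype U] [DecidableEq U]
    (X₂ : Finset (Finset U)) (hX₂ : X₂.Nonempty)
    (hcard : ∀ s ∈ X₂, s.card = 2)
    (hcover : ∀ i : U, ∃ s ∈ X₂, i ∈ s)
    (π₂ : Finset U → ℝ) (hpos : ∀ s ∈ X₂, 0 < π₂ s)
    (hsum : ∑ s ∈ X₂, π₂ s = 1)
    (π₁ : U → ℝ)
    (hπ₁ : ∀ i, π₁ i = (1 / 2) * ∑ j : U, if {i, j} ∈ X₂ then π₂ {i, j} else 0)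
    (Pdown : Finset U → Finset U → ℝ)
    (hPdown : ∀ s t, Pdown s t =
      if t ∈ X₂ then (1 / 2) * ∑ i ∈ s ∩ t, π₂ t / (2 * π₁ i) else 0)
    (ρ : ℝ)
    (hLS : ∀ g : Finset U → ℝ, (∀ s ∈ X₂, 0 ≤ g s) →
      ρ * (∑ s ∈ X₂, π₂ s * g s * Real.log (g s / ∑ t ∈ X₂, π₂ t * g t)) ≤
        (1 / 2) * ∑ s ∈ X₂, ∑ t ∈ X₂,
          π₂ s * Pdown s t * (Real.sqrt (g s) - Real.sqrt (g t)) ^ 2)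
    (f : Finset U → ℝ) (hf : ∀ s ∈ X₂, 0 ≤ f s)
    (f1 : U → ℝ)
    (hf1 : ∀ i, f1 i =
      (2 * π₁ i)⁻¹ * ∑ j : U, if {i, j} ∈ X₂ then π₂ {i, j} * f {i, j} else 0) :
    (∑ i : U, π₁ i * f1 i * Real.log (f1 i / ∑ j, π₁ j * f1 j)) ≤
      (1 - ρ) * ∑ s ∈ X₂, π₂ s * f s * Real.log (f s / ∑ t ∈ X₂, π₂ t * f t) := by
  have hw : ∀ i, 2 * π₁ i = ∑ s ∈ X₂ with i ∈ s, π₂ s := by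
    intro i
    rw [hπ₁, sum_neighbors_eq_sum_edges X₂ hcard π₂]
    ring
  have hwpos : ∀ i, 0 < 2 * π₁ i := by
    intro i
    rw [hw]
    obtain ⟨s, hs, his⟩ := hcover i
    exact Finset.sum_pos (fun t ht => hpos t (Finset.mem_filter.1 ht).1)
      ⟨s, Finset.mem_filter.2 ⟨hs, his⟩⟩
  have hF : ∀ i, 2 * π₁ i * f1 i = ∑ s ∈ X₂ with i ∈ s, π₂ s * f s := by
    intro i
    rw [hf1, sum_neighbors_eq_sum_edges X₂ hcard (fun s => π₂ s * f s),
      mul_inv_cancel_left₀ (hwpos i).ne']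
  have hmean : ∑ j, π₁ j * f1 j = ∑ s ∈ X₂, π₂ s * f s := by
    have h := sum_sum_edges X₂ hcard (fun s => π₂ s * f s)
    simp_rw [← hF, mul_assoc] at h
    rw [← Finset.mul_sum] at h
    linarith
  have hLSf := hLS f hf
  rw [hmean]
  set m := ∑ s ∈ X₂, π₂ s * f s with hm
  have hmpos : ∀ s ∈ X₂, 0 < f s → 0 < m := fun s hs h =>
    (mul_pos (hpos s hs) h).trans_le
      (Finset.single_le_sum (fun t ht => mul_nonneg (hpos t ht).le (hf t ht)) hs)
  have hchain : ∑ s ∈ X₂, π₂ s * f s * Real.log (f s / m) -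
      ∑ i, π₁ i * f1 i * Real.log (f1 i / m) =
      (1 / 2) * ∑ i, ∑ s ∈ X₂ with i ∈ s,
        π₂ s * f s * (Real.log (f s / m) - Real.log (f1 i / m)) := by
    have h2 := sum_sum_edges X₂ hcard (fun s => π₂ s * f s * Real.log (f s / m))
    have h1 : ∑ i, ∑ s ∈ X₂ with i ∈ s, π₂ s * f s * Real.log (f1 i / m) =
        2 * ∑ i, π₁ i * f1 i * Real.log (f1 i / m) := by
      rw [Finset.mul_sum]
      refine Finset.sum_congr rfl fun i _ => ?_
      rw [← Finset.sum_mul, ← hF]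
      ring
    simp_rw [mul_sub, Finset.sum_sub_distrib]
    rw [h1, h2]
    ring
  have hdir : (1 / 2) * ∑ s ∈ X₂, ∑ t ∈ X₂,
      π₂ s * Pdown s t * (√(f s) - √(f t)) ^ 2 =
      (1 / 2) * ∑ i, (∑ s ∈ X₂ with i ∈ s, π₂ s * f s -
        (∑ s ∈ X₂ with i ∈ s, π₂ s * √(f s)) ^ 2 / (2 * π₁ i)) := by
    rw [dirichlet_decomp X₂ π₂ (fun s => √(f s)) (fun i => 2 * π₁ i) Pdown hPdown]
    congr 1
    rw [Finset.mul_sum]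
    refine Finset.sum_congr rfl fun i _ => ?_
    have hsq : ∑ s ∈ X₂ with i ∈ s, π₂ s * √(f s) ^ 2 = ∑ s ∈ X₂ with i ∈ s, π₂ s * f s :=
      Finset.sum_congr rfl fun s hs => by rw [Real.sq_sqrt (hf s (Finset.mem_filter.1 hs).1)]
    rw [sum_sum_sq_sub, hsq, ← hw]
    have := (hwpos i).ne'
    have h3 : π₁ i ≠ 0 := by intro h; simp [h] at this
    field_simp
  have hloc := Finset.sum_le_sum fun i (_ : i ∈ (Finset.univ : Finset U)) =>
    local_ent_ge_var (X₂.filter (i ∈ ·)) π₂ f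
      (fun s hs => hpos s (Finset.mem_filter.1 hs).1)
      (fun s hs => hf s (Finset.mem_filter.1 hs).1) (hwpos i) (hF i)
      (fun s hs => hmpos s (Finset.mem_filter.1 hs).1)
  rw [hdir] at hLSf
  linarith
end

section
/- Fix an integer Δ ≥ 3 and a real λ > 0. Let G = (V,E) be a finite simple graph of maximum degree at most Δ, and let μ_G be the monomer-dimer distribution on G with fugacity λ. Then for every Λ ⊆ E, every feasible boundary condition τ : Λ → {0,1}, and every edge e ∈ E∖Λ such that both events {σ_e = 0} and {σ_e = 1} have positive probability given σ_Λ = τ, one has Σ_{f ∈ E∖Λ, f ≠ e} |I_G^τ(e→f)| ≤ min{2λΔ, 2·√(1+λΔ)}. -/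
/-!
Fixing `σ` on `Λ` and on `e = uv` forces a set of edges into the matching and others out of it. By
the spatial Markov property (`mdMass_markov`) the remaining model is again a monomer-dimer model, on
a set `F` of free edges when `e` is left out, and on `F - u - v` when `e` is used. By the triangle
inequality the total influence of `e` is therefore at most the total change of the edge marginals
when `u` is deleted from `F`, plus the total change when `v` is deleted from `F - u`.

So let `T(F, u)` (`vertInf`) be the total change caused by deleting one vertex, let `p(F, u)`
(`free`) be the probability that `u` is uncovered, and `r = √(1 + λΔ)`. Revealing the edge `uw` that
covers `u`, which has probability `q_w = λ p(F, u) p(F - u, w)`, gives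
`T(F, u) ≤ ∑_w q_w (1 + T(F - u, w))` with `∑_w q_w = 1 - p(F, u)` (`vertInf_rec`, `free_rec`).

`vertInf_le` bounds `T` by induction on the number of edges. If `T ≤ λΔ` holds after the deletion,
then `T ≤ (1 - p)(1 + λΔ) ≤ λΔ`, since `p ≥ 1 / (1 + λΔ)`. For the other bound the induction
carries both `T ≤ r` and `T ≤ (1 - p)(1 + r)`: the first gives the second one step later, and the
second gives back the first because `x (2 - (1 + r) x) ≤ 1 / (1 + r)` for each `x = p(F - u, w)` and
`λΔ / (1 + r) = r - 1`.
-/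

open Finset

attribute [local instance] Classical.propDecidable

noncomputable section

variable {V : Type} [Fintype V] [DecidableEq V]

/-- `M` is (the edge set of) a matching of `G`: all its members are edges of `G` and no two
distinct members share a vertex. -/
def IsMatchingSet (G : SimpleGraph V) (M : Finset (Sym2 V)) : Prop :=
  ↑M ⊆ G.edgeSet ∧ ∀ e ∈ M, ∀ f ∈ M, e ≠ f → ∀ v : V, v ∈ e → v ∉ f

/-- Weight `λ^{|M|}` of a matching `M` in the monomer-dimer model (zero otherwise). -/
def mdWeight (G : SimpleGraph V) (lam : ℝ) (M : Finset (Sym2 V)) : ℝ :=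
  if IsMatchingSet G M then lam ^ M.card else 0

/-- Total monomer-dimer weight of the event `P`. -/
def mdMass (G : SimpleGraph V) (lam : ℝ) (P : Finset (Sym2 V) → Prop) : ℝ :=
  ∑ M : Finset (Sym2 V), if P M then mdWeight G lam M else 0

/-- Conditional probability of the event `P` given the event `Q` under the monomer-dimer
distribution on `G` with fugacity `λ`. -/
def mdCondPr (G : SimpleGraph V) (lam : ℝ) (P Q : Finset (Sym2 V) → Prop) : ℝ :=
  mdMass G lam (fun M => P M ∧ Q M) / mdMass G lam Q

/-- Pairwise influence `I_G^τ(e→f)` of edge `e` on edge `f`, conditioned on an event `Q`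
(describing a boundary condition):
`Pr[f ∈ M | e ∈ M, Q] − Pr[f ∈ M | e ∉ M, Q]`.
(Here `e ∈ M`, i.e. `σ_e = 0`, means that `e` belongs to the matching.) -/
def mdInfluence (G : SimpleGraph V) (lam : ℝ) (e f : Sym2 V)
    (Q : Finset (Sym2 V) → Prop) : ℝ :=
  mdCondPr G lam (fun M => f ∈ M) (fun M => e ∈ M ∧ Q M)
    - mdCondPr G lam (fun M => f ∈ M) (fun M => e ∉ M ∧ Q M)

end

section MonomerDimer

set_option linter.unusedSectionVars false

variable {V : Type} [Fintype V] [DecidableEq V]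

/-! ### Deletions, partition functions and marginals -/

/-- The edges of `F` that do not contain the vertex `u`: the edge set of the graph after deleting
`u`. -/
def delVert (F : Finset (Sym2 V)) (u : V) : Finset (Sym2 V) := F.filter (fun f => u ∉ f)

/-- The edges of `F` that share no vertex with an edge of `A`. -/
def delEdges (F A : Finset (Sym2 V)) : Finset (Sym2 V) :=
  F.filter (fun f => ∀ a ∈ A, ∀ v : V, v ∈ a → v ∉ f)

/-- Partition function of the monomer-dimer model on the edges `F`. -/
noncomputable def pf (G : SimpleGraph V) (lam : ℝ) (F : Finset (Sym2 V)) : ℝ :=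
  mdMass G lam (fun M => M ⊆ F)

/-- Total weight of the matchings inside `F` that use the edge `f`. -/
noncomputable def pfMem (G : SimpleGraph V) (lam : ℝ) (F : Finset (Sym2 V)) (f : Sym2 V) : ℝ :=
  mdMass G lam (fun M => M ⊆ F ∧ f ∈ M)

/-- Probability that `f` belongs to a random matching of the graph with edge set `F`. -/
noncomputable def marg (G : SimpleGraph V) (lam : ℝ) (F : Finset (Sym2 V)) (f : Sym2 V) : ℝ :=
  pfMem G lam F f / pf G lam F

/-- Probability that the vertex `u` is left uncovered by a random matching inside `F`. -/
noncomputable def free (G : SimpleGraph V) (lam : ℝ) (F : Finset (Sym2 V)) (u : V) : ℝ :=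
  pf G lam (delVert F u) / pf G lam F

/-- Total variation, summed over all edges, of the edge marginals when the vertex `u` is deleted. -/
noncomputable def vertInf (G : SimpleGraph V) (lam : ℝ) (F : Finset (Sym2 V)) (u : V) : ℝ :=
  ∑ f : Sym2 V, |marg G lam F f - marg G lam (delVert F u) f|

lemma mdMass_eq (G : SimpleGraph V) (lam : ℝ) (P : Finset (Sym2 V) → Prop) :
    mdMass G lam P = ∑ M ∈ univ.filter (fun M => P M ∧ IsMatchingSet G M), lam ^ M.card := by
  simp only [mdMass, mdWeight, Finset.sum_filter]
  refine Finset.sum_congr rfl fun M _ => ?_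
  by_cases h1 : P M <;> by_cases h2 : IsMatchingSet G M <;> simp [h1, h2]

lemma mdMass_congr (G : SimpleGraph V) (lam : ℝ) {P Q : Finset (Sym2 V) → Prop}
    (h : ∀ M, IsMatchingSet G M → (P M ↔ Q M)) : mdMass G lam P = mdMass G lam Q := by
  rw [mdMass_eq, mdMass_eq]
  refine Finset.sum_congr ?_ fun _ _ => rfl
  ext M
  simp only [mem_filter, mem_univ, true_and]
  constructor
  · rintro ⟨a, b⟩; exact ⟨(h M b).1 a, b⟩
  · rintro ⟨a, b⟩; exact ⟨(h M b).2 a, b⟩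

lemma mdMass_false (G : SimpleGraph V) (lam : ℝ) {P : Finset (Sym2 V) → Prop}
    (h : ∀ M, IsMatchingSet G M → ¬ P M) : mdMass G lam P = 0 := by
  rw [mdMass_eq, Finset.filter_false_of_mem, Finset.sum_empty]
  rintro M - ⟨a, b⟩
  exact h M b a

/-- An event of positive mass contains a matching. -/
lemma exists_of_mdMass_pos (G : SimpleGraph V) (lam : ℝ) {P : Finset (Sym2 V) → Prop}
    (h : 0 < mdMass G lam P) : ∃ M, IsMatchingSet G M ∧ P M := by
  by_contra! hc
  exact h.ne' (mdMass_false G lam hc)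

lemma IsMatchingSet.subset {G : SimpleGraph V} {M N : Finset (Sym2 V)} (h : IsMatchingSet G M)
    (hN : N ⊆ M) : IsMatchingSet G N :=
  ⟨fun _ hx => h.1 (hN hx), fun e he f hf => h.2 e (hN he) f (hN hf)⟩

/-! ### Spatial Markov property -/

/-- Spatial Markov property: matchings whose restriction to the complement of `S` is the matching
`A` are the sets `A ∪ N` with `N` a matching of the edges of `S` not touching `A`. -/
lemma mdMass_markov (G : SimpleGraph V) (lam : ℝ) (S A : Finset (Sym2 V))
    (hA : IsMatchingSet G A) (hd : Disjoint A S) (φ : Finset (Sym2 V) → Prop) :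
    mdMass G lam (fun M => M \ S = A ∧ φ M) =
      lam ^ A.card * mdMass G lam (fun N => N ⊆ delEdges S A ∧ φ (A ∪ N)) := by
  rw [mdMass_eq, mdMass_eq, Finset.mul_sum]
  refine Finset.sum_bij' (fun M _ => M ∩ S) (fun N _ => A ∪ N) ?_ ?_ ?_ ?_ ?_
  · intro M hM
    simp only [mem_filter, mem_univ, true_and] at hM ⊢
    obtain ⟨⟨h1, h2⟩, h3⟩ := hM
    have hu : A ∪ M ∩ S = M := by rw [← h1]; exact Finset.sdiff_union_inter M S
    refine ⟨⟨?_, by rwa [hu]⟩, h3.subset inter_subset_left⟩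
    intro f hf
    rw [mem_inter] at hf
    refine mem_filter.2 ⟨hf.2, fun a ha => ?_⟩
    have ha' : a ∈ M \ S := h1 ▸ ha
    rw [mem_sdiff] at ha'
    exact h3.2 a ha'.1 f hf.1 (fun h => ha'.2 (h ▸ hf.2))
  · intro N hN
    simp only [mem_filter, mem_univ, true_and] at hN ⊢
    obtain ⟨⟨h1, h2⟩, h3⟩ := hN
    have hNS : N ⊆ S := h1.trans (filter_subset _ _)
    have hcross : ∀ a ∈ A, ∀ f ∈ N, ∀ v : V, v ∈ a → v ∉ f := fun a ha f hf =>
      (mem_filter.1 (h1 hf)).2 a ha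
    refine ⟨⟨?_, h2⟩, ?_, ?_⟩
    · rw [union_sdiff_distrib, sdiff_eq_empty_iff_subset.2 hNS, union_empty]
      exact sdiff_eq_self_of_disjoint hd
    · intro x hx
      rcases mem_union.1 (mem_coe.1 hx) with h | h
      · exact hA.1 h
      · exact h3.1 h
    · intro a ha b hb hab v hva hvb
      rcases mem_union.1 ha with h | h <;> rcases mem_union.1 hb with h' | h'
      · exact hA.2 a h b h' hab v hva hvb
      · exact hcross a h b h' v hva hvb
      · exact hcross b h' a h v hvb hva
      · exact h3.2 a h b h' hab v hva hvb
  · intro M hM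
    simp only [mem_filter, mem_univ, true_and] at hM
    rw [← hM.1.1]; exact Finset.sdiff_union_inter M S
  · intro N hN
    simp only [mem_filter, mem_univ, true_and] at hN
    have hNS : N ⊆ S := hN.1.1.trans (filter_subset _ _)
    rw [union_inter_distrib_right, disjoint_iff_inter_eq_empty.1 hd, empty_union]
    exact inter_eq_left.2 hNS
  · intro M hM
    simp only [mem_filter, mem_univ, true_and] at hM
    rw [← pow_add, ← hM.1.1, Finset.card_sdiff_add_card_inter]

lemma isMatchingSet_empty (G : SimpleGraph V) : IsMatchingSet G (∅ : Finset (Sym2 V)) := by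
  constructor <;> simp

lemma pf_pos (G : SimpleGraph V) {lam : ℝ} (hlam : 0 < lam) (F : Finset (Sym2 V)) :
    0 < pf G lam F := by
  rw [pf, mdMass_eq]
  refine Finset.sum_pos (fun _ _ => by positivity) ⟨∅, ?_⟩
  simp [isMatchingSet_empty]

lemma pfMem_eq_zero (G : SimpleGraph V) (lam : ℝ) {F : Finset (Sym2 V)} {f : Sym2 V} (h : f ∉ F) :
    pfMem G lam F f = 0 :=
  mdMass_false G lam fun _ _ hM => h (hM.1 hM.2)

/-! ### Recursion over the edges at a vertex -/

/-- A matching inside `F` either avoids `u` or uses exactly one edge of `F` at `u`. -/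
lemma mdMass_split_vertex (G : SimpleGraph V) (lam : ℝ) (F : Finset (Sym2 V)) (u : V)
    (φ : Finset (Sym2 V) → Prop) :
    mdMass G lam (fun M => M ⊆ F ∧ φ M) = mdMass G lam (fun M => M ⊆ delVert F u ∧ φ M) +
      ∑ g ∈ F.filter (u ∈ ·), mdMass G lam (fun M => (M ⊆ F ∧ g ∈ M) ∧ φ M) := by
  simp only [mdMass]
  rw [Finset.sum_comm, ← Finset.sum_add_distrib]
  refine Finset.sum_congr rfl fun M _ => ?_
  by_cases hm : IsMatchingSet G M
  swap
  · simp [mdWeight, hm]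
  by_cases hφ : φ M
  swap
  · simp [hφ]
  by_cases hF : M ⊆ F
  swap
  · have : ¬ M ⊆ delVert F u := fun h => hF (h.trans (filter_subset _ _))
    simp [hF, this]
  by_cases hu : ∃ g ∈ M, u ∈ g
  · obtain ⟨g, hg, hug⟩ := hu
    have h1 : ¬ M ⊆ delVert F u := fun h => (mem_filter.1 (h hg)).2 hug
    rw [Finset.sum_eq_single g]
    · simp [hF, hφ, hg, h1]
    · intro g' hg' hne
      have : g' ∉ M := fun h => hm.2 g' h g hg hne u (mem_filter.1 hg').2 hug
      simp [this]
    · intro h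
      exact absurd (mem_filter.2 ⟨hF hg, hug⟩) h
  · push Not at hu
    have h1 : M ⊆ delVert F u := fun g hg => mem_filter.2 ⟨hF hg, hu g hg⟩
    rw [Finset.sum_eq_zero]
    · simp [hF, hφ, h1]
    · intro g hg
      have : g ∉ M := fun h => hu g h (mem_filter.1 hg).2
      simp [this]

lemma isMatchingSet_singleton {G : SimpleGraph V} {g : Sym2 V} (hg : g ∈ G.edgeSet) :
    IsMatchingSet G {g} := by
  constructor
  · simpa using hg
  · intro a ha b hb hab
    rw [mem_singleton] at ha hb
    exact absurd (ha.trans hb.symm) hab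

/-- Removing the edges that meet the edge `uw` amounts to deleting `u` and then `w`. -/
lemma delEdges_singleton (F : Finset (Sym2 V)) (u w : V) :
    delEdges (F.erase s(u, w)) {s(u, w)} = delVert (delVert F u) w := by
  ext f
  simp only [delEdges, delVert, mem_filter, mem_erase, mem_singleton, forall_eq, Sym2.mem_iff]
  constructor
  · rintro ⟨⟨_, h1⟩, h2⟩
    exact ⟨⟨h1, h2 u (Or.inl rfl)⟩, h2 w (Or.inr rfl)⟩
  · rintro ⟨⟨h1, h2⟩, h3⟩
    refine ⟨⟨?_, h1⟩, ?_⟩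
    · rintro rfl; exact h2 (by simp)
    · rintro v (rfl | rfl) <;> assumption

/-- Matchings inside `F` that use the edge `uw` are `uw` together with a matching of `F - u - w`. -/
lemma mdMass_edge {G : SimpleGraph V} (lam : ℝ) {F : Finset (Sym2 V)} {u w : V}
    (hF : s(u, w) ∈ F) (hg : s(u, w) ∈ G.edgeSet) (φ : Finset (Sym2 V) → Prop) :
    mdMass G lam (fun M => (M ⊆ F ∧ s(u, w) ∈ M) ∧ φ M) =
      lam * mdMass G lam (fun N => N ⊆ delVert (delVert F u) w ∧ φ ({s(u, w)} ∪ N)) := by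
  have h := mdMass_markov G lam (F.erase s(u, w)) {s(u, w)} (isMatchingSet_singleton hg)
    (by simp) φ
  rw [delEdges_singleton, card_singleton, pow_one] at h
  rw [← h]
  refine mdMass_congr G lam fun M _ => and_congr_left fun _ => ?_
  constructor
  · rintro ⟨h1, h2⟩
    ext x
    simp only [mem_sdiff, mem_erase, mem_singleton, not_and]
    constructor
    · rintro ⟨hx, h3⟩
      by_contra hne
      exact h3 hne (h1 hx)
    · rintro rfl
      exact ⟨h2, fun h => absurd rfl h⟩
  · intro h1
    refine ⟨fun x hx => ?_, ?_⟩
    · by_contra hxF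
      have : x ∈ M \ F.erase s(u, w) := mem_sdiff.2 ⟨hx, fun h => hxF (mem_of_mem_erase h)⟩
      rw [h1, mem_singleton] at this
      exact hxF (this ▸ hF)
    · have : s(u, w) ∈ M \ F.erase s(u, w) := by rw [h1]; simp
      exact (mem_sdiff.1 this).1

/-- The endpoint of `g` other than `u`, when `u ∈ g` (and `u` itself otherwise). -/
noncomputable def oth (u : V) (g : Sym2 V) : V := if h : u ∈ g then Sym2.Mem.other h else u

lemma oth_spec {u : V} {g : Sym2 V} (h : u ∈ g) : s(u, oth u g) = g := by
  rw [oth, dif_pos h]; exact Sym2.other_spec h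

lemma pf_rec {G : SimpleGraph V} (lam : ℝ) {F : Finset (Sym2 V)}
    (hF : ∀ f ∈ F, f ∈ G.edgeSet) (u : V) :
    pf G lam F = pf G lam (delVert F u) +
      ∑ g ∈ F.filter (u ∈ ·), lam * pf G lam (delVert (delVert F u) (oth u g)) := by
  have h := mdMass_split_vertex G lam F u (fun _ => True)
  simp only [and_true] at h
  rw [pf, h, pf]
  congr 1
  refine Finset.sum_congr rfl fun g hg => ?_
  obtain ⟨hgF, hug⟩ := mem_filter.1 hg
  have hs := oth_spec hug
  have := mdMass_edge (G := G) lam (F := F) (u := u) (w := oth u g) (by rwa [hs])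
    (by rw [hs]; exact hF g hgF) (fun _ => True)
  simp only [and_true, hs] at this
  rw [this, pf]

lemma pfMem_rec {G : SimpleGraph V} (lam : ℝ) {F : Finset (Sym2 V)}
    (hF : ∀ f ∈ F, f ∈ G.edgeSet) (u : V) (f : Sym2 V) :
    pfMem G lam F f = pfMem G lam (delVert F u) f +
      ∑ g ∈ F.filter (u ∈ ·), lam * (pfMem G lam (delVert (delVert F u) (oth u g)) f +
        if g = f then pf G lam (delVert (delVert F u) (oth u g)) else 0) := by
  have h := mdMass_split_vertex G lam F u (fun M => f ∈ M)
  rw [pfMem, h, pfMem]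
  congr 1
  refine Finset.sum_congr rfl fun g hg => ?_
  obtain ⟨hgF, hug⟩ := mem_filter.1 hg
  have hs := oth_spec hug
  have := mdMass_edge (G := G) lam (F := F) (u := u) (w := oth u g) (by rwa [hs])
    (by rw [hs]; exact hF g hgF) (fun M => f ∈ M)
  simp only [hs] at this
  rw [this]
  congr 1
  by_cases hgf : g = f
  · subst hgf
    rw [pfMem_eq_zero, zero_add, if_pos rfl, pf]
    · exact mdMass_congr G lam fun M _ => by simp
    · intro hmem
      exact (mem_filter.1 (mem_filter.1 hmem).1).2 hug
  · rw [if_neg hgf, add_zero, pfMem]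
    exact mdMass_congr G lam fun M _ => by simp [Ne.symm hgf]

/-- Revealing how `u` is matched: `u` is matched along `g = uw` with probability
`λ · free F u · free (F - u) w`, after which the model lives on `F - u - w`. -/
lemma vertInf_rec {G : SimpleGraph V} {lam : ℝ} (hlam : 0 < lam) {F : Finset (Sym2 V)}
    (hF : ∀ f ∈ F, f ∈ G.edgeSet) (u : V) :
    vertInf G lam F u ≤ ∑ g ∈ F.filter (u ∈ ·), lam * free G lam F u *
      free G lam (delVert F u) (oth u g) * (1 + vertInf G lam (delVert F u) (oth u g)) := by
  have hZ := pf_pos G hlam F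
  have hZu := pf_pos G hlam (delVert F u)
  have key : ∀ f, marg G lam F f - marg G lam (delVert F u) f =
      ∑ g ∈ F.filter (u ∈ ·), lam * free G lam F u * free G lam (delVert F u) (oth u g) *
        ((if g = f then 1 else 0) + (marg G lam (delVert (delVert F u) (oth u g)) f
          - marg G lam (delVert F u) f)) := by
    intro f
    have e1 : marg G lam F f - marg G lam (delVert F u) f = (pfMem G lam F f -
        marg G lam (delVert F u) f * pf G lam F) / pf G lam F := by
      rw [marg]; field_simp
    have e2 : marg G lam (delVert F u) f * pf G lam (delVert F u) =
        pfMem G lam (delVert F u) f := by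
      rw [marg]; field_simp
    have e3 : pfMem G lam F f - marg G lam (delVert F u) f * pf G lam F =
        ∑ g ∈ F.filter (u ∈ ·), lam * (pfMem G lam (delVert (delVert F u) (oth u g)) f +
        (if g = f then pf G lam (delVert (delVert F u) (oth u g)) else 0) -
          marg G lam (delVert F u) f * pf G lam (delVert (delVert F u) (oth u g))) := by
      rw [pfMem_rec lam hF u f, pf_rec lam hF u, mul_add, e2, Finset.mul_sum,
        add_sub_add_left_eq_sub, ← Finset.sum_sub_distrib]
      exact Finset.sum_congr rfl fun g _ => by ring
    rw [e1, e3, Finset.sum_div]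
    refine Finset.sum_congr rfl fun g _ => ?_
    have hZw := pf_pos G hlam (delVert (delVert F u) (oth u g))
    rw [free, free, marg, marg]
    split_ifs <;> field_simp <;> ring
  have hq : ∀ g, 0 ≤ lam * free G lam F u * free G lam (delVert F u) (oth u g) := fun g => by
    have hZw := pf_pos G hlam (delVert (delVert F u) (oth u g))
    rw [free, free]; positivity
  rw [vertInf]
  calc _ ≤ ∑ f, ∑ g ∈ F.filter (u ∈ ·), lam * free G lam F u *
        free G lam (delVert F u) (oth u g) * ((if g = f then 1 else 0) +
        |marg G lam (delVert F u) f - marg G lam (delVert (delVert F u) (oth u g)) f|) := by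
        refine Finset.sum_le_sum fun f _ => ?_
        rw [key f]
        refine (Finset.abs_sum_le_sum_abs _ _).trans (Finset.sum_le_sum fun g _ => ?_)
        rw [abs_mul, abs_of_nonneg (hq g)]
        refine mul_le_mul_of_nonneg_left ?_ (hq g)
        refine (abs_add_le _ _).trans (add_le_add ?_ (abs_sub_comm _ _).le)
        split_ifs <;> simp
    _ = _ := by
        rw [Finset.sum_comm]
        refine Finset.sum_congr rfl fun g _ => ?_
        rw [← Finset.mul_sum, Finset.sum_add_distrib, Finset.sum_ite_eq, if_pos (mem_univ _),
          vertInf]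

lemma free_pos {G : SimpleGraph V} {lam : ℝ} (hlam : 0 < lam) (F : Finset (Sym2 V)) (u : V) :
    0 < free G lam F u := div_pos (pf_pos G hlam _) (pf_pos G hlam _)

/-- The recursion `free F u = 1 / (1 + λ ∑ free (F - u) w)`, cleared of denominators. -/
lemma free_rec {G : SimpleGraph V} {lam : ℝ} (hlam : 0 < lam) {F : Finset (Sym2 V)}
    (hF : ∀ f ∈ F, f ∈ G.edgeSet) (u : V) :
    free G lam F u * (1 + lam * ∑ g ∈ F.filter (u ∈ ·), free G lam (delVert F u) (oth u g)) =
      1 := by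
  have hZ := pf_pos G hlam F
  have hZu := pf_pos G hlam (delVert F u)
  simp only [free]
  rw [← Finset.sum_div]
  have h := pf_rec lam hF u
  rw [← Finset.mul_sum] at h
  field_simp
  linarith

lemma free_le_one {G : SimpleGraph V} {lam : ℝ} (hlam : 0 < lam) {F : Finset (Sym2 V)}
    (hF : ∀ f ∈ F, f ∈ G.edgeSet) (u : V) : free G lam F u ≤ 1 := by
  have h := free_rec hlam hF u
  have h1 : 0 ≤ lam * ∑ g ∈ F.filter (u ∈ ·), free G lam (delVert F u) (oth u g) :=
    mul_nonneg hlam.le (Finset.sum_nonneg fun g _ => (free_pos hlam _ _).le)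
  nlinarith [free_pos (G := G) hlam F u]

/-! ### Bounds on the effect of deleting a vertex -/

lemma delVert_subset (F : Finset (Sym2 V)) (u : V) : delVert F u ⊆ F := filter_subset _ _

/-- Deleting a vertex changes the edge marginals by at most `λΔ` and at most `√(1+λΔ)` in total.
The middle bound is what makes the induction for the last one close: together they exploit two
consecutive steps of the recursion. -/
lemma vertInf_le {G : SimpleGraph V} {lam : ℝ} (hlam : 0 < lam) (Δ : ℕ) (r : ℝ) (hr : 0 ≤ r)
    (hr2 : r ^ 2 = 1 + lam * Δ) (n : ℕ) : ∀ (F : Finset (Sym2 V)), F.card = n →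
    (∀ f ∈ F, f ∈ G.edgeSet) → (∀ v, (F.filter (v ∈ ·)).card ≤ Δ) → ∀ u,
    vertInf G lam F u ≤ lam * Δ ∧ vertInf G lam F u ≤ (1 - free G lam F u) * (1 + r) ∧
      vertInf G lam F u ≤ r := by
  induction n using Nat.strong_induction_on with
  | _ n ih =>
  intro F hn hF hdeg u
  by_cases hu : delVert F u = F
  · have h0 : vertInf G lam F u = 0 := by simp [vertInf, hu]
    have := free_le_one hlam hF u
    rw [h0]
    exact ⟨by positivity, mul_nonneg (by linarith) (by linarith), hr⟩
  have hlt : (delVert F u).card < n :=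
    hn ▸ Finset.card_lt_card ((delVert_subset F u).ssubset_of_ne hu)
  have hF' : ∀ f ∈ delVert F u, f ∈ G.edgeSet := fun f hf => hF f (delVert_subset F u hf)
  have ih' := fun w => ih _ hlt (delVert F u) rfl hF'
    (fun v => (card_le_card (filter_subset_filter _ (delVert_subset F u))).trans (hdeg v)) w
  have hrec := vertInf_rec hlam hF u
  have hfree := free_rec hlam hF u
  have hp := free_pos (G := G) hlam F u
  set p := free G lam F u
  set x : Sym2 V → ℝ := fun g => free G lam (delVert F u) (oth u g) with hx
  set t : Sym2 V → ℝ := fun g => vertInf G lam (delVert F u) (oth u g) with ht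
  have hx0 : ∀ g, 0 < x g := fun g => free_pos hlam _ _
  have hx1 : ∀ g, x g ≤ 1 := fun g => free_le_one hlam hF' _
  set D := F.filter (u ∈ ·)
  have hD : (D.card : ℝ) ≤ Δ := by exact_mod_cast hdeg u
  have hX : lam * ∑ g ∈ D, x g ≤ lam * Δ := by
    refine mul_le_mul_of_nonneg_left (le_trans ?_ hD) hlam.le
    simpa using Finset.sum_le_card_nsmul D x 1 fun g _ => hx1 g
  -- a uniform bound `K` on the later influences costs a factor `1 - p`
  have step : ∀ K : ℝ, (∀ g, t g ≤ K) → vertInf G lam F u ≤ (1 - p) * (1 + K) := by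
    intro K hK
    refine hrec.trans ?_
    calc _ ≤ ∑ g ∈ D, lam * p * x g * (1 + K) := by
          refine Finset.sum_le_sum fun g _ => ?_
          have := hx0 g
          have := hK g
          exact mul_le_mul_of_nonneg_left (by linarith) (by positivity)
      _ = (p * (lam * ∑ g ∈ D, x g)) * (1 + K) := by
          rw [← Finset.sum_mul, ← Finset.mul_sum]; ring
      _ = _ := by congr 1; linarith
  refine ⟨?_, step r fun g => (ih' _).2.2, ?_⟩
  · have h := step (lam * Δ) fun g => (ih' _).1
    nlinarith
  · refine hrec.trans ?_
    have hterm : ∀ g ∈ D, lam * p * x g * (1 + t g) ≤ lam * p * (r * x g + 1 / (1 + r)) := by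
      intro g _
      have h1 : t g ≤ (1 - x g) * (1 + r) := (ih' _).2.1
      have h2 := hx0 g
      rw [mul_assoc]
      refine mul_le_mul_of_nonneg_left ?_ (by positivity)
      have h3 : x g * (1 + t g) ≤ x g * (1 + (1 - x g) * (1 + r)) :=
        mul_le_mul_of_nonneg_left (by linarith) h2.le
      -- `x (2 - (1 + r) x)` is maximal at `x = 1 / (1 + r)`
      have h4 : x g * (2 - (1 + r) * x g) ≤ 1 / (1 + r) := by
        rw [le_div_iff₀ (by linarith)]
        nlinarith [sq_nonneg ((1 + r) * x g - 1)]
      nlinarith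
    refine (Finset.sum_le_sum hterm).trans ?_
    rw [← Finset.mul_sum, Finset.sum_add_distrib, ← Finset.mul_sum, Finset.sum_const, nsmul_eq_mul]
    have h5 : lam * (D.card * (1 / (1 + r))) ≤ r - 1 := by
      rw [mul_one_div, ← mul_div_assoc, div_le_iff₀ (by linarith)]
      nlinarith
    calc _ = r * (p * (lam * ∑ g ∈ D, x g)) + p * (lam * (D.card * (1 / (1 + r)))) := by ring
      _ ≤ r * (1 - p) + p * (r - 1) :=
          add_le_add (le_of_eq (by congr 1; linarith)) (mul_le_mul_of_nonneg_left h5 hp.le)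
      _ ≤ r := by linarith

end MonomerDimer

/-! ### Influence of an edge under a boundary condition -/

/-- **Spectral independence bound for the monomer-dimer model** (total edge influence):
on a graph of maximum degree at most `Δ`, for every boundary condition `τ` on a set
`Λ ⊆ E` of edges and every free edge `e` whose two conditional events have positive
probability, the total absolute influence of `e` on the other free edges is at most
`min{2λΔ, 2√(1+λΔ)}`.  (A boundary value `τ g = false` means `σ_g = 0`, i.e. `g` is in
the matching.) -/
theorem monomer_dimer_total_influence
    (Δ : ℕ) (hΔ : 3 ≤ Δ) (lam : ℝ) (hlam : 0 < lam)
    {V : Type} [Fintype V] [DecidableEq V]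
    (G : SimpleGraph V) [DecidableRel G.Adj] (hdeg : ∀ v : V, G.degree v ≤ Δ)
    (Λ : Finset (Sym2 V)) (hΛ : ↑Λ ⊆ G.edgeSet) (τ : Sym2 V → Bool)
    (hfeas : 0 < mdMass G lam (fun M => ∀ g ∈ Λ, (g ∈ M ↔ τ g = false)))
    (e : Sym2 V) (he : e ∈ G.edgeFinset) (heΛ : e ∉ Λ)
    (he0 : 0 < mdMass G lam
      (fun M => e ∈ M ∧ ∀ g ∈ Λ, (g ∈ M ↔ τ g = false)))
    (he1 : 0 < mdMass G lam
      (fun M => e ∉ M ∧ ∀ g ∈ Λ, (g ∈ M ↔ τ g = false))) :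
    ∑ f ∈ (G.edgeFinset \ Λ).erase e,
        |mdInfluence G lam e f (fun M => ∀ g ∈ Λ, (g ∈ M ↔ τ g = false))| ≤
      min (2 * lam * (Δ : ℝ)) (2 * Real.sqrt (1 + lam * (Δ : ℝ))) := by
  classical
  set Q : Finset (Sym2 V) → Prop := fun M => ∀ g ∈ Λ, (g ∈ M ↔ τ g = false) with hQ
  set A : Finset (Sym2 V) := Λ.filter (fun g => τ g = false) with hAdef
  set S : Finset (Sym2 V) := (G.edgeFinset \ Λ).erase e with hS
  set F : Finset (Sym2 V) := delEdges S A with hFdef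
  have hSE : ∀ f ∈ S, f ∈ G.edgeSet := fun f hf =>
    SimpleGraph.mem_edgeFinset.1 (mem_sdiff.1 (mem_of_mem_erase hf)).1
  have hFS : F ⊆ S := filter_subset _ _
  have hAΛ : A ⊆ Λ := filter_subset _ _
  have hSΛ : ∀ f ∈ S, f ∉ Λ := fun f hf => (mem_sdiff.1 (mem_of_mem_erase hf)).2
  have heA : e ∉ A := fun h => heΛ (hAΛ h)
  have heS : e ∉ S := fun h => (mem_erase.1 h).1 rfl
  -- the edges which `τ` and `e` force into the matching form a matching
  have hAe : IsMatchingSet G (insert e A) := by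
    obtain ⟨M, hM, heM, hτ⟩ := exists_of_mdMass_pos G lam he0
    refine hM.subset fun g hg => ?_
    rcases mem_insert.1 hg with rfl | h
    · exact heM
    · exact (hτ g (hAΛ h)).2 (mem_filter.1 h).2
  have hA : IsMatchingSet G A := hAe.subset (subset_insert _ _)
  have hdA : Disjoint A S := disjoint_left.2 fun f hf hf' => hSΛ f hf' (hAΛ hf)
  have hdAe : Disjoint (insert e A) S := disjoint_insert_left.2 ⟨heS, hdA⟩
  have hevent : ∀ M, IsMatchingSet G M → ((e ∉ M ∧ Q M) ↔ M \ S = A) ∧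
      ((e ∈ M ∧ Q M) ↔ M \ S = insert e A) := by
    intro M hM
    have hME : ∀ f ∈ M, f ∈ G.edgeFinset := fun f hf => SimpleGraph.mem_edgeFinset.2 (hM.1 hf)
    have hin : ∀ f, f ∈ M \ S ↔ f ∈ M ∧ (f = e ∨ f ∈ Λ) := by
      intro f
      simp only [hS, mem_sdiff, mem_erase]
      have := hME f
      tauto
    have hAm : ∀ f, f ∈ A ↔ f ∈ Λ ∧ τ f = false := fun f => mem_filter
    simp only [Finset.ext_iff, hin, mem_insert, hAm, hQ]
    clear_value A S Q F
    clear hin hAm hME hSΛ hdA hdAe hA hAe hSE hFS hM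
    constructor
    · constructor
      · rintro ⟨h1, h2⟩ f
        have := h2 f
        grind
      · intro h
        refine ⟨fun h1 => heΛ ((h e).1 ⟨h1, Or.inl rfl⟩).1, fun f hf => ?_⟩
        have := h f
        grind
    · constructor
      · rintro ⟨h1, h2⟩ f
        have := h2 f
        grind
      · intro h
        refine ⟨((h e).2 (Or.inl rfl)).1, fun f hf => ?_⟩
        have := h f
        grind
  obtain ⟨u, v, rfl⟩ : ∃ u v, e = s(u, v) := by
    induction e using Sym2.ind with | _ u v => exact ⟨u, v, rfl⟩
  have hdel : delEdges S (insert s(u, v) A) = delVert (delVert F u) v := by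
    ext f
    simp only [hFdef, delEdges, delVert, mem_filter, mem_insert, forall_eq_or_imp, Sym2.mem_iff]
    constructor
    · rintro ⟨h1, h2, h3⟩
      exact ⟨⟨⟨h1, h3⟩, h2.1⟩, h2.2 v rfl⟩
    · rintro ⟨⟨⟨h1, h3⟩, h4⟩, h5⟩
      exact ⟨h1, ⟨h4, by rintro w rfl; exact h5⟩, h3⟩
  -- conditioning on the part of the matching outside `S` leaves the model on a smaller edge set
  have hcond : ∀ (B : Finset (Sym2 V)) (R : Finset (Sym2 V) → Prop), IsMatchingSet G B →
      Disjoint B S → (∀ M, IsMatchingSet G M → (R M ↔ M \ S = B)) → ∀ f ∈ S,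
      mdCondPr G lam (fun M => f ∈ M) R = marg G lam (delEdges S B) f := by
    intro B R hB hd hR f hf
    have h1 := mdMass_markov G lam S B hB hd (fun _ => True)
    have h2 := mdMass_markov G lam S B hB hd (fun M => f ∈ M)
    have hfB : f ∉ B := fun h => disjoint_left.1 hd h hf
    simp only [and_true] at h1
    rw [mdCondPr, mdMass_congr G lam hR, h1, mdMass_congr G lam (Q := fun M => M \ S = B ∧ f ∈ M)
      (fun M hM => by rw [and_comm, hR M hM]), h2, mul_div_mul_left _ _ (by positivity), marg, pf,
      pfMem]
    congr 1
    exact mdMass_congr G lam fun M _ => by simp [hfB]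
  have hinf : ∀ f ∈ S, mdInfluence G lam s(u, v) f Q =
      marg G lam (delVert (delVert F u) v) f - marg G lam F f := by
    intro f hf
    rw [mdInfluence, hcond _ _ hAe hdAe (fun M hM => (hevent M hM).2) f hf,
      hcond _ _ hA hdA (fun M hM => (hevent M hM).1) f hf, hdel]
  have hFE : ∀ f ∈ F, f ∈ G.edgeSet := fun f hf => hSE f (hFS hf)
  have hFdeg : ∀ w, (F.filter (w ∈ ·)).card ≤ Δ := by
    intro w
    refine le_trans ?_ (hdeg w)
    rw [← SimpleGraph.card_incidenceFinset_eq_degree]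
    refine card_le_card fun f hf => ?_
    rw [SimpleGraph.mem_incidenceFinset]
    exact ⟨hFE f (mem_filter.1 hf).1, (mem_filter.1 hf).2⟩
  have hsum : ∑ f ∈ S, |mdInfluence G lam s(u, v) f Q| ≤
      vertInf G lam F u + vertInf G lam (delVert F u) v := by
    calc _ ≤ ∑ f ∈ S, (|marg G lam F f - marg G lam (delVert F u) f| +
          |marg G lam (delVert F u) f - marg G lam (delVert (delVert F u) v) f|) := by
          refine Finset.sum_le_sum fun f hf => ?_
          rw [hinf f hf, abs_sub_comm]
          exact abs_sub_le _ _ _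
      _ ≤ _ := by
          rw [vertInf, vertInf, ← Finset.sum_add_distrib]
          exact Finset.sum_le_sum_of_subset_of_nonneg (subset_univ _)
            fun _ _ _ => by positivity
  have hb := fun (F' : Finset (Sym2 V)) (hF' : F' ⊆ F) (w : V) =>
    vertInf_le (G := G) hlam Δ (Real.sqrt (1 + lam * Δ)) (Real.sqrt_nonneg _)
      (Real.sq_sqrt (by positivity)) F'.card F' rfl (fun f hf => hFE f (hF' hf))
      (fun x => (card_le_card (filter_subset_filter _ hF')).trans (hFdeg x)) w
  obtain ⟨a1, -, a2⟩ := hb F subset_rfl u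
  obtain ⟨b1, -, b2⟩ := hb (delVert F u) (delVert_subset F u) v
  exact le_min (by linarith) (by linarith)
end

section
/- Let T = (V,E) be a finite tree (a connected acyclic finite simple graph) of maximum degree at most Δ, let λ > 0, and let e ∈ E. Then, for the monomer-dimer model on T with fugacity λ, Σ_{f ∈ E, f ≠ e} |I_T(e→f)| ≤ min{2λΔ, 2·√(1+λΔ)}. -/
/-!
The bound holds on every finite graph, and acyclicity plays no role in the argument below.

For a finite edge set `E` and a vertex `u`, let `E - u` be the set of edges of `E` avoiding `u`, let
`p_u(E) = Z(E - u) / Z(E)` be the probability that `u` is unmatched, and let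
`F(E, u) = ∑_{f ∈ E} |Pr_{E - u}(f) - Pr_E(f)|`. Splitting the matchings of `E` according to the
edge `uc` that covers `u`, if there is one, gives `p_u(E) (1 + λ ∑_c p_c(E - u)) = 1` and, by the
triangle inequality,
`F(E, u) ≤ ∑_c q_c (1 + F(E - u, c))` with `q_c = Pr_E(uc) = λ p_u(E) p_c(E - u)`
(`pUn_recursion` and `infl_recursion`).

Put `s = √(1 + λΔ)`. By induction on `E`, the three inequalities `F ≤ s`, `F ≤ (1 + s)(1 - p)` and
`F ≤ (1 + λΔ)(1 - p)` propagate through the recursion (`infl_step`); since `p ≥ 1 / (1 + λΔ)`, the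
last one also gives `F ≤ λΔ`. The decisive estimate is `∑_c q_c (1 - p_c) ≤ (s - 1) / (s + 1)`.

For an edge `e = uv`, conditioning on `e ∈ M` yields the model on `E - u - v`, and conditioning on
`e ∉ M` yields the model on `E \ e`. Interpolating through `E - u = (E \ e) - u`, the total
influence of `e` is at most `F(E \ e, u) + F(E - u, v)`.
-/

open Finset

attribute [local instance] Classical.propDecidable

noncomputable section

set_option linter.unusedSectionVars false

namespace MonomerDimer

variable {V : Type} [Fintype V] [DecidableEq V]

/-! ### The model on a finite edge set -/

/-- The matchings contained in the edge set `E`. Loops are not excluded; a loop is treated as an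
edge covering a single vertex. -/
def matchings (E : Finset (Sym2 V)) : Finset (Finset (Sym2 V)) :=
  E.powerset.filter (fun M => ∀ e ∈ M, ∀ f ∈ M, e ≠ f → ∀ v : V, v ∈ e → v ∉ f)

/-- Deletion of a vertex: the edges of `E` avoiding `u`. -/
def del (E : Finset (Sym2 V)) (u : V) : Finset (Sym2 V) := E.filter (fun f => u ∉ f)

/-- The neighbours of `u` along edges of `E`. -/
def nbr (E : Finset (Sym2 V)) (u : V) : Finset V := univ.filter (fun c => s(u, c) ∈ E)

/-- The partition function of the monomer-dimer model on the edge set `E`. -/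
def Z (lam : ℝ) (E : Finset (Sym2 V)) : ℝ := ∑ M ∈ matchings E, lam ^ M.card

/-- The total weight of the matchings in `E` that contain the edge `f`. -/
def W (lam : ℝ) (E : Finset (Sym2 V)) (f : Sym2 V) : ℝ :=
  ∑ M ∈ matchings E, if f ∈ M then lam ^ M.card else 0

/-- The probability that `f` belongs to the random matching in `E`. -/
def pr (lam : ℝ) (E : Finset (Sym2 V)) (f : Sym2 V) : ℝ := W lam E f / Z lam E

/-- The probability that `u` is not covered by the random matching in `E`. -/
def pUn (lam : ℝ) (E : Finset (Sym2 V)) (u : V) : ℝ := Z lam (del E u) / Z lam E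

/-- The total change of the edge marginals when the vertex `u` is deleted. -/
def infl (lam : ℝ) (E : Finset (Sym2 V)) (u : V) : ℝ :=
  ∑ f ∈ E, |pr lam (del E u) f - pr lam E f|

lemma mem_matchings {E M : Finset (Sym2 V)} : M ∈ matchings E ↔
    M ⊆ E ∧ ∀ e ∈ M, ∀ f ∈ M, e ≠ f → ∀ v : V, v ∈ e → v ∉ f := by
  simp [matchings]

lemma mem_del {E : Finset (Sym2 V)} {u : V} {f : Sym2 V} : f ∈ del E u ↔ f ∈ E ∧ u ∉ f := by
  simp [del]

lemma mem_nbr {E : Finset (Sym2 V)} {u c : V} : c ∈ nbr E u ↔ s(u, c) ∈ E := by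
  simp [nbr]

/-! ### Decomposition at a vertex -/

/-- Removing the edge `uc` is a bijection from the matchings of `E` containing `uc` to the
matchings of `E - u - c`. -/
lemma sum_mem_edge (E : Finset (Sym2 V)) {u c : V} (h : s(u, c) ∈ E)
    (g : Finset (Sym2 V) → ℝ) :
    ∑ M ∈ matchings E, (if s(u, c) ∈ M then g M else 0) =
      ∑ M ∈ matchings (del (del E u) c), g (insert s(u, c) M) := by
  rw [← Finset.sum_filter]
  symm
  refine Finset.sum_bij' (fun M _ => insert s(u, c) M) (fun M _ => M.erase s(u, c)) ?_ ?_ ?_ ?_ ?_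
  · intro M hM
    rw [mem_matchings] at hM
    obtain ⟨hs, hm⟩ := hM
    have hs' : ∀ f ∈ M, f ∈ E ∧ u ∉ f ∧ c ∉ f := fun f hf => by
      have := hs hf
      rw [mem_del, mem_del] at this
      tauto
    rw [Finset.mem_filter, mem_matchings]
    refine ⟨⟨?_, ?_⟩, Finset.mem_insert_self _ _⟩
    · intro f hf
      rcases Finset.mem_insert.1 hf with rfl | hf
      · exact h
      · exact (hs' f hf).1
    · intro a ha b hb hab v hva hvb
      rcases Finset.mem_insert.1 ha with rfl | ha' <;>
        rcases Finset.mem_insert.1 hb with rfl | hb'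
      · exact hab rfl
      · rcases Sym2.mem_iff.1 hva with rfl | rfl
        · exact (hs' b hb').2.1 hvb
        · exact (hs' b hb').2.2 hvb
      · rcases Sym2.mem_iff.1 hvb with rfl | rfl
        · exact (hs' a ha').2.1 hva
        · exact (hs' a ha').2.2 hva
      · exact hm a ha' b hb' hab v hva hvb
  · intro M hM
    rw [Finset.mem_filter, mem_matchings] at hM
    obtain ⟨⟨hs, hm⟩, he⟩ := hM
    rw [mem_matchings]
    refine ⟨?_, fun a ha b hb => hm a (Finset.mem_of_mem_erase ha) b (Finset.mem_of_mem_erase hb)⟩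
    intro f hf
    obtain ⟨hne, hf⟩ := Finset.mem_erase.1 hf
    rw [mem_del, mem_del]
    exact ⟨⟨hs hf, hm _ he f hf hne.symm u (Sym2.mem_mk_left u c)⟩,
      hm _ he f hf hne.symm c (Sym2.mem_mk_right u c)⟩
  · intro M hM
    refine Finset.erase_insert ?_
    intro hmem
    have := (mem_matchings.1 hM).1 hmem
    rw [mem_del, mem_del] at this
    exact this.2 (Sym2.mem_mk_right u c)
  · intro M hM
    exact Finset.insert_erase (Finset.mem_filter.1 hM).2
  · intro M _
    rfl

/-- Decomposition of a sum over matchings according to the partner of `u`, if any. -/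
lemma sum_split (E : Finset (Sym2 V)) (u : V) (g : Finset (Sym2 V) → ℝ) :
    ∑ M ∈ matchings E, g M = ∑ M ∈ matchings (del E u), g M +
      ∑ c ∈ nbr E u, ∑ M ∈ matchings (del (del E u) c), g (insert s(u, c) M) := by
  have h1 : ∑ c ∈ nbr E u, ∑ M ∈ matchings (del (del E u) c), g (insert s(u, c) M) =
      ∑ M ∈ matchings E, ∑ c ∈ nbr E u, (if s(u, c) ∈ M then g M else 0) := by
    rw [Finset.sum_comm]
    exact Finset.sum_congr rfl fun c hc => (sum_mem_edge E (mem_nbr.1 hc) g).symm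
  have h2 : matchings (del E u) = (matchings E).filter (fun M => ∀ f ∈ M, u ∉ f) := by
    ext M
    simp only [Finset.mem_filter, mem_matchings, Finset.subset_iff, mem_del]
    constructor
    · rintro ⟨a, b⟩
      exact ⟨⟨fun f hf => (a hf).1, b⟩, fun f hf => (a hf).2⟩
    · rintro ⟨⟨a, b⟩, d⟩
      exact ⟨fun f hf => ⟨a hf, d f hf⟩, b⟩
  rw [h1, h2, Finset.sum_filter, ← Finset.sum_add_distrib]
  refine Finset.sum_congr rfl fun M hM => ?_
  obtain ⟨hs, hm⟩ := mem_matchings.1 hM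
  by_cases hu : ∀ f ∈ M, u ∉ f
  · rw [if_pos hu, Finset.sum_eq_zero, add_zero]
    intro c _
    exact if_neg fun hc => hu _ hc (Sym2.mem_mk_left u c)
  · rw [if_neg hu, zero_add]
    push Not at hu
    obtain ⟨f, hf, huf⟩ := hu
    obtain ⟨c, rfl⟩ := huf
    rw [Finset.sum_eq_single_of_mem c (mem_nbr.2 (hs hf)), if_pos hf]
    intro b _ hb
    refine if_neg fun hb' => ?_
    refine hm _ hf _ hb' (fun h => hb ?_) u (Sym2.mem_mk_left _ _) (Sym2.mem_mk_left _ _)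
    exact (Sym2.congr_right.1 h).symm

lemma Z_pos {lam : ℝ} (hlam : 0 < lam) (E : Finset (Sym2 V)) : 0 < Z lam E := by
  refine Finset.sum_pos (fun M _ => pow_pos hlam _) ⟨∅, ?_⟩
  simp [mem_matchings]

lemma card_insert_edge {E M : Finset (Sym2 V)} {u c : V} (hM : M ∈ matchings (del (del E u) c)) :
    (insert s(u, c) M).card = M.card + 1 := by
  refine Finset.card_insert_of_notMem fun hmem => ?_
  have := (mem_matchings.1 hM).1 hmem
  rw [mem_del] at this
  exact this.2 (Sym2.mem_mk_right u c)

lemma sum_pow_insert (lam : ℝ) (E : Finset (Sym2 V)) (u c : V) :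
    ∑ M ∈ matchings (del (del E u) c), lam ^ (insert s(u, c) M).card =
      lam * Z lam (del (del E u) c) := by
  rw [Z, Finset.mul_sum]
  refine Finset.sum_congr rfl fun M hM => ?_
  rw [card_insert_edge hM, pow_succ']

lemma sum_ite_insert (lam : ℝ) (E : Finset (Sym2 V)) {u c : V} {f : Sym2 V} (hf : f ≠ s(u, c)) :
    ∑ M ∈ matchings (del (del E u) c),
      (if f ∈ insert s(u, c) M then lam ^ (insert s(u, c) M).card else 0) =
      lam * W lam (del (del E u) c) f := by
  rw [W, Finset.mul_sum]
  refine Finset.sum_congr rfl fun M hM => ?_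
  rw [card_insert_edge hM, pow_succ']
  simp [Finset.mem_insert, hf]

lemma Z_split (lam : ℝ) (E : Finset (Sym2 V)) (u : V) :
    Z lam E = Z lam (del E u) + ∑ c ∈ nbr E u, lam * Z lam (del (del E u) c) := by
  rw [Z, sum_split E u]
  simp only [sum_pow_insert]
  rfl

lemma W_split (lam : ℝ) (E : Finset (Sym2 V)) {u : V} {f : Sym2 V} (hf : u ∉ f) :
    W lam E f = W lam (del E u) f + ∑ c ∈ nbr E u, lam * W lam (del (del E u) c) f := by
  rw [W, sum_split E u]
  congr 1
  refine Finset.sum_congr rfl fun c _ => sum_ite_insert lam E ?_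
  rintro rfl
  exact hf (Sym2.mem_mk_left u c)

lemma W_edge (lam : ℝ) (E : Finset (Sym2 V)) {u c : V} (h : s(u, c) ∈ E) :
    W lam E s(u, c) = lam * Z lam (del (del E u) c) := by
  rw [W, sum_mem_edge E h, sum_pow_insert]

lemma W_eq_zero (lam : ℝ) {E : Finset (Sym2 V)} {f : Sym2 V} (h : f ∉ E) : W lam E f = 0 :=
  Finset.sum_eq_zero fun _ hM => if_neg fun hf => h ((mem_matchings.1 hM).1 hf)

/-! ### Recursions for `p` and `F` -/

lemma pUn_pos {lam : ℝ} (hlam : 0 < lam) (E : Finset (Sym2 V)) (u : V) : 0 < pUn lam E u :=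
  div_pos (Z_pos hlam _) (Z_pos hlam _)

lemma pUn_recursion {lam : ℝ} (hlam : 0 < lam) (E : Finset (Sym2 V)) (u : V) :
    pUn lam E u * (1 + lam * ∑ c ∈ nbr E u, pUn lam (del E u) c) = 1 := by
  have h1 := (Z_pos hlam E).ne'
  have h2 := (Z_pos hlam (del E u)).ne'
  have h := Z_split lam E u
  rw [← Finset.mul_sum] at h
  simp only [pUn, ← Finset.sum_div]
  field_simp
  exact h.symm

lemma pr_edge {lam : ℝ} (hlam : 0 < lam) (E : Finset (Sym2 V)) {u c : V} (h : s(u, c) ∈ E) :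
    pr lam E s(u, c) = lam * pUn lam E u * pUn lam (del E u) c := by
  have h1 := (Z_pos hlam E).ne'
  have h2 := (Z_pos hlam (del E u)).ne'
  rw [pr, W_edge lam E h, pUn, pUn]
  field_simp

/-- Conditioning on the partner of `u`: the effect of deleting `u` on the marginal of an edge
away from `u` is minus the weighted sum, with weights `Pr_E(uc)`, of the effects of deleting `c`
from `E - u`. -/
lemma pr_diff {lam : ℝ} (hlam : 0 < lam) (E : Finset (Sym2 V)) {u : V} {f : Sym2 V}
    (hf : u ∉ f) :
    pr lam (del E u) f - pr lam E f = ∑ c ∈ nbr E u, lam * pUn lam E u * pUn lam (del E u) c *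
      (pr lam (del E u) f - pr lam (del (del E u) c) f) := by
  have h1 := (Z_pos hlam E).ne'
  have h2 := (Z_pos hlam (del E u)).ne'
  have e1 : ∀ c, lam * pUn lam E u * pUn lam (del E u) c *
      (pr lam (del E u) f - pr lam (del (del E u) c) f) =
      (lam * Z lam (del (del E u) c)) * (pr lam (del E u) f / Z lam E) -
        (lam * W lam (del (del E u) c) f) / Z lam E := by
    intro c
    have h3 := (Z_pos hlam (del (del E u) c)).ne'
    simp only [pUn, pr]
    field_simp
  have hZ := Z_split lam E u
  have hW := W_split lam E hf
  simp only [e1]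
  rw [Finset.sum_sub_distrib, ← Finset.sum_mul, ← Finset.sum_div,
    ← sub_eq_iff_eq_add'.2 hZ, ← sub_eq_iff_eq_add'.2 hW]
  simp only [pr]
  field_simp
  ring

lemma infl_recursion {lam : ℝ} (hlam : 0 < lam) (E : Finset (Sym2 V)) (u : V) :
    infl lam E u ≤ ∑ c ∈ nbr E u, lam * pUn lam E u * pUn lam (del E u) c *
      (1 + infl lam (del E u) c) := by
  have hq : ∀ c, 0 ≤ lam * pUn lam E u * pUn lam (del E u) c := fun c =>
    (mul_pos (mul_pos hlam (pUn_pos hlam _ _)) (pUn_pos hlam _ _)).le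
  have himg : E.filter (fun f => ¬ u ∉ f) = (nbr E u).image (fun c => s(u, c)) := by
    ext f
    simp only [Finset.mem_filter, Finset.mem_image, mem_nbr, not_not]
    constructor
    · rintro ⟨hf, ⟨c, rfl⟩⟩
      exact ⟨c, hf, rfl⟩
    · rintro ⟨c, hc, rfl⟩
      exact ⟨hc, Sym2.mem_mk_left u c⟩
  have hinc : ∑ f ∈ E.filter (fun f => ¬ u ∉ f), |pr lam (del E u) f - pr lam E f| =
      ∑ c ∈ nbr E u, lam * pUn lam E u * pUn lam (del E u) c := by
    rw [himg, Finset.sum_image (fun a _ b _ h => Sym2.congr_right.1 h)]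
    refine Finset.sum_congr rfl fun c hc => ?_
    have h0 : pr lam (del E u) s(u, c) = 0 := by
      rw [pr, W_eq_zero, zero_div]
      rw [mem_del]
      exact fun h => h.2 (Sym2.mem_mk_left u c)
    rw [h0, pr_edge hlam E (mem_nbr.1 hc), zero_sub, abs_neg, abs_of_nonneg (hq c)]
  have hfar : ∑ f ∈ del E u, |pr lam (del E u) f - pr lam E f| ≤
      ∑ c ∈ nbr E u, lam * pUn lam E u * pUn lam (del E u) c * infl lam (del E u) c := by
    calc _ ≤ ∑ f ∈ del E u, ∑ c ∈ nbr E u, lam * pUn lam E u * pUn lam (del E u) c *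
          |pr lam (del (del E u) c) f - pr lam (del E u) f| := by
          refine Finset.sum_le_sum fun f hf => ?_
          rw [pr_diff hlam E (mem_del.1 hf).2]
          refine (Finset.abs_sum_le_sum_abs _ _).trans (Finset.sum_le_sum fun c _ => ?_)
          rw [abs_mul, abs_of_nonneg (hq c), abs_sub_comm]
      _ = _ := by
          rw [Finset.sum_comm]
          simp only [infl, Finset.mul_sum]
  rw [infl, ← Finset.sum_filter_add_sum_filter_not E (fun f => u ∉ f), hinc]
  simp only [mul_add, mul_one, Finset.sum_add_distrib]
  rw [add_comm]
  exact add_le_add_right hfar _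

/-! ### Bounds on the influence of a vertex -/

/-- One step of the induction, as a statement about real numbers: `x` and `F` are the values of
`p` and `F` at the neighbours, `p` and `Fu` those at the vertex itself, and `s ^ 2 = 1 + λΔ`. -/
lemma infl_step {ι : Type} (N : Finset ι) (x F : ι → ℝ) {lam D s p Fu : ℝ} (hlam : 0 < lam)
    (hs : 1 ≤ s) (hs2 : s ^ 2 = 1 + lam * D) (hN : (N.card : ℝ) ≤ D) (hp : 0 < p)
    (hrec : p * (1 + lam * ∑ c ∈ N, x c) = 1)
    (hFu : Fu ≤ ∑ c ∈ N, lam * p * x c * (1 + F c))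
    (hx0 : ∀ c ∈ N, 0 < x c) (hx1 : ∀ c ∈ N, x c ≤ 1) (hxk : ∀ c ∈ N, 1 ≤ s ^ 2 * x c)
    (h1 : ∀ c ∈ N, F c ≤ s) (h2 : ∀ c ∈ N, F c ≤ (1 + s) * (1 - x c))
    (h3 : ∀ c ∈ N, F c ≤ s ^ 2 * (1 - x c)) :
    p ≤ 1 ∧ 1 ≤ s ^ 2 * p ∧ Fu ≤ s ∧ Fu ≤ (1 + s) * (1 - p) ∧ Fu ≤ s ^ 2 * (1 - p) := by
  set X := ∑ c ∈ N, x c with hX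
  have hX0 : 0 ≤ X := Finset.sum_nonneg fun c hc => (hx0 c hc).le
  have hXD : X ≤ D := by
    refine le_trans ?_ hN
    simpa using Finset.sum_le_sum hx1
  have hq : ∀ c ∈ N, 0 ≤ lam * p * x c := fun c hc =>
    (mul_pos (mul_pos hlam hp) (hx0 c hc)).le
  have hsum : ∑ c ∈ N, lam * p * x c = 1 - p := by
    rw [← Finset.mul_sum, ← hX]
    linarith
  have hconst : ∀ K : ℝ, (∀ c ∈ N, 1 + F c ≤ K) → Fu ≤ K * (1 - p) := by
    intro K hK
    rw [← hsum, Finset.mul_sum]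
    refine hFu.trans (Finset.sum_le_sum fun c hc => ?_)
    rw [mul_comm K]
    exact mul_le_mul_of_nonneg_left (hK c hc) (hq c hc)
  have hlX : 0 ≤ lam * X := mul_nonneg hlam.le hX0
  refine ⟨?_, ?_, ?_, ?_, ?_⟩
  · nlinarith
  · have : lam * X ≤ lam * D := mul_le_mul_of_nonneg_left hXD hlam.le
    rw [← hrec, hs2, mul_comm]
    exact mul_le_mul_of_nonneg_right (by linarith) hp.le
  · -- After multiplying out `p`, the claim is a sum over the neighbours of pointwise bounds
    -- coming from `2 x - (1 + s) x ^ 2 ≤ 1 / (1 + s)`.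
    have hpt : ∀ c ∈ N, x c * (1 + F c) ≤ s * x c + 1 / (1 + s) := by
      intro c hc
      have hs1 : 0 < 1 + s := by linarith
      have ha : x c * (1 + F c) ≤ x c * (1 + (1 + s) * (1 - x c)) :=
        mul_le_mul_of_nonneg_left (by linarith [h2 c hc]) (hx0 c hc).le
      refine ha.trans ?_
      have hb : 0 ≤ ((1 + s) * x c - 1) ^ 2 / (1 + s) := by positivity
      have hc' : ((1 + s) * x c - 1) ^ 2 / (1 + s) =
          (1 + s) * x c ^ 2 - 2 * x c + 1 / (1 + s) := by
        field_simp
        ring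
      nlinarith
    have hsumpt : ∑ c ∈ N, x c * (1 + F c) ≤ s * X + D / (1 + s) := by
      refine (Finset.sum_le_sum hpt).trans ?_
      rw [Finset.sum_add_distrib, ← Finset.mul_sum, Finset.sum_const, nsmul_eq_mul, mul_one_div]
      have : (N.card : ℝ) / (1 + s) ≤ D / (1 + s) := by gcongr
      linarith
    have hD : lam * (D / (1 + s)) = s - 1 := by
      have hs1 : 1 + s ≠ 0 := by positivity
      field_simp
      nlinarith
    have hfac : ∑ c ∈ N, lam * p * x c * (1 + F c) = lam * p * ∑ c ∈ N, x c * (1 + F c) := by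
      rw [Finset.mul_sum]
      exact Finset.sum_congr rfl fun c _ => by ring
    rw [hfac] at hFu
    have hlp : 0 ≤ lam * p := (mul_pos hlam hp).le
    have hle : lam * p * ∑ c ∈ N, x c * (1 + F c) ≤ lam * p * (s * X + D / (1 + s)) :=
      mul_le_mul_of_nonneg_left hsumpt hlp
    have heq : lam * p * (s * X + D / (1 + s)) = s * (p * (1 + lam * X)) - p := by
      linear_combination p * hD
    rw [heq, hrec] at hle
    linarith
  · exact hconst _ fun c hc => by linarith [h1 c hc]
  · exact hconst _ fun c hc => by nlinarith [h3 c hc, hxk c hc]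

lemma infl_invariant {lam : ℝ} (hlam : 0 < lam) {D s : ℝ} (hs : 1 ≤ s)
    (hs2 : s ^ 2 = 1 + lam * D) (n : ℕ) : ∀ E : Finset (Sym2 V), E.card ≤ n →
    (∀ u, ((nbr E u).card : ℝ) ≤ D) → ∀ u, pUn lam E u ≤ 1 ∧ 1 ≤ s ^ 2 * pUn lam E u ∧
      infl lam E u ≤ s ∧ infl lam E u ≤ (1 + s) * (1 - pUn lam E u) ∧
      infl lam E u ≤ s ^ 2 * (1 - pUn lam E u) := by
  induction n with
  | zero =>
    intro E hE hD u
    have h0 : E = ∅ := by simpa using hE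
    have hN : nbr E u = ∅ := by
      ext c
      simp [mem_nbr, h0]
    refine infl_step (nbr E u) (fun c => pUn lam (del E u) c) (fun c => infl lam (del E u) c)
      hlam hs hs2 (hD u) (pUn_pos hlam E u) (pUn_recursion hlam E u) (infl_recursion hlam E u)
      ?_ ?_ ?_ ?_ ?_ ?_ <;> simp [hN]
  | succ n ih =>
    intro E hE hD u
    have hsub : ∀ v, nbr (del E u) v ⊆ nbr E v := by
      intro v c hc
      rw [mem_nbr, mem_del] at hc
      exact mem_nbr.2 hc.1
    have hD' : ∀ v, ((nbr (del E u) v).card : ℝ) ≤ D := fun v =>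
      le_trans (by exact_mod_cast Finset.card_le_card (hsub v)) (hD v)
    have hcard : ∀ c ∈ nbr E u, (del E u).card ≤ n := by
      intro c hc
      have : (del E u).card < E.card := by
        refine Finset.card_lt_card (Finset.filter_ssubset.2 ⟨s(u, c), mem_nbr.1 hc, ?_⟩)
        exact not_not.2 (Sym2.mem_mk_left u c)
      omega
    have key := fun c hc => ih (del E u) (hcard c hc) hD' c
    exact infl_step (nbr E u) (fun c => pUn lam (del E u) c) (fun c => infl lam (del E u) c)
      hlam hs hs2 (hD u) (pUn_pos hlam E u) (pUn_recursion hlam E u) (infl_recursion hlam E u)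
      (fun c _ => pUn_pos hlam _ _) (fun c hc => (key c hc).1) (fun c hc => (key c hc).2.1)
      (fun c hc => (key c hc).2.2.1) (fun c hc => (key c hc).2.2.2.1)
      (fun c hc => (key c hc).2.2.2.2)

lemma infl_le {lam : ℝ} (hlam : 0 < lam) {D : ℝ} (hD : 0 ≤ D) (E : Finset (Sym2 V))
    (hE : ∀ u, ((nbr E u).card : ℝ) ≤ D) (u : V) :
    infl lam E u ≤ min (lam * D) (Real.sqrt (1 + lam * D)) := by
  have h0 : 0 ≤ lam * D := mul_nonneg hlam.le hD
  have hs2 : Real.sqrt (1 + lam * D) ^ 2 = 1 + lam * D := Real.sq_sqrt (by linarith)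
  have hs : 1 ≤ Real.sqrt (1 + lam * D) := Real.one_le_sqrt.2 (by linarith)
  obtain ⟨-, hp, h1, -, h3⟩ := infl_invariant hlam hs hs2 E.card E le_rfl hE u
  rw [hs2] at hp h3
  exact le_min (by linarith) h1

/-! ### From vertex influence to edge influence -/

/-- Passing from `E \ e` to `E - u - v`, where `e = uv`, by deleting `u` and then `v`. -/
lemma sum_edge_le {lam : ℝ} (E : Finset (Sym2 V)) (u v : V) :
    ∑ f ∈ E.erase s(u, v), |pr lam (del (del E u) v) f - pr lam (E.erase s(u, v)) f| ≤
      infl lam (E.erase s(u, v)) u + infl lam (del E u) v := by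
  have hdel : del (E.erase s(u, v)) u = del E u := by
    ext f
    simp only [mem_del, Finset.mem_erase]
    constructor
    · rintro ⟨⟨-, a⟩, b⟩
      exact ⟨a, b⟩
    · rintro ⟨a, b⟩
      refine ⟨⟨?_, a⟩, b⟩
      rintro rfl
      exact b (Sym2.mem_mk_left u v)
  have hext : infl lam (del E u) v =
      ∑ f ∈ E.erase s(u, v), |pr lam (del (del E u) v) f - pr lam (del E u) f| := by
    refine Finset.sum_subset ?_ ?_
    · intro f hf
      rw [← hdel, mem_del] at hf
      exact hf.1
    · intro f _ hf
      have hf' : f ∉ del (del E u) v := fun h => hf (mem_del.1 h).1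
      rw [pr, pr, W_eq_zero lam hf, W_eq_zero lam hf']
      simp
  rw [hext, infl, hdel, ← Finset.sum_add_distrib]
  refine Finset.sum_le_sum fun f _ => ?_
  rw [add_comm]
  exact abs_sub_le _ _ _

lemma mdMass_eq (G : SimpleGraph V) (lam : ℝ) (E : Finset (Sym2 V))
    (hE : ∀ f, f ∈ E ↔ f ∈ G.edgeSet) (P : Finset (Sym2 V) → Prop) :
    mdMass G lam P = ∑ M ∈ matchings E, if P M then lam ^ M.card else 0 := by
  have hm : ∀ M, IsMatchingSet G M ↔ M ∈ matchings E := by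
    intro M
    rw [mem_matchings, IsMatchingSet]
    refine and_congr_left' ?_
    simp only [Set.subset_def, Finset.subset_iff, hE, Finset.mem_coe]
  have h : (∑ M ∈ matchings E, if P M then lam ^ M.card else 0) =
      ∑ M, if M ∈ matchings E then (if P M then lam ^ M.card else 0) else 0 := by
    simp
  rw [h, mdMass]
  refine Finset.sum_congr rfl fun M _ => ?_
  simp only [mdWeight, hm]
  split_ifs <;> rfl

lemma sum_notMem_edge (E : Finset (Sym2 V)) (e : Sym2 V) (g : Finset (Sym2 V) → ℝ) :
    ∑ M ∈ matchings E, (if e ∉ M then g M else 0) = ∑ M ∈ matchings (E.erase e), g M := by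
  rw [← Finset.sum_filter]
  refine Finset.sum_congr ?_ fun _ _ => rfl
  ext M
  simp only [Finset.mem_filter, mem_matchings, Finset.subset_erase]
  tauto

lemma mdInfluence_eq {lam : ℝ} (hlam : 0 < lam) (G : SimpleGraph V) (E : Finset (Sym2 V))
    (hE : ∀ f, f ∈ E ↔ f ∈ G.edgeSet) {u v : V} (he : s(u, v) ∈ E) {f : Sym2 V}
    (hf : f ≠ s(u, v)) :
    mdInfluence G lam s(u, v) f (fun _ => True) =
      pr lam (del (del E u) v) f - pr lam (E.erase s(u, v)) f := by
  have a1 : mdMass G lam (fun M => s(u, v) ∈ M ∧ True) = lam * Z lam (del (del E u) v) := by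
    rw [mdMass_eq G lam E hE, ← sum_pow_insert, ← sum_mem_edge E he fun M => lam ^ M.card]
    simp only [and_true]
  have a2 : mdMass G lam (fun M => f ∈ M ∧ s(u, v) ∈ M ∧ True) =
      lam * W lam (del (del E u) v) f := by
    rw [mdMass_eq G lam E hE, ← sum_ite_insert lam E hf,
      ← sum_mem_edge E he fun M => if f ∈ M then lam ^ M.card else 0]
    refine Finset.sum_congr rfl fun M _ => ?_
    by_cases h1 : f ∈ M <;> by_cases h2 : s(u, v) ∈ M <;> simp [h1, h2]
  have b1 : mdMass G lam (fun M => s(u, v) ∉ M ∧ True) = Z lam (E.erase s(u, v)) := by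
    rw [mdMass_eq G lam E hE, Z, ← sum_notMem_edge E]
    simp only [and_true]
  have b2 : mdMass G lam (fun M => f ∈ M ∧ s(u, v) ∉ M ∧ True) = W lam (E.erase s(u, v)) f := by
    rw [mdMass_eq G lam E hE, W, ← sum_notMem_edge E]
    refine Finset.sum_congr rfl fun M _ => ?_
    by_cases h1 : f ∈ M <;> by_cases h2 : s(u, v) ∈ M <;> simp [h1, h2]
  rw [mdInfluence, mdCondPr, mdCondPr, a1, a2, b1, b2, mul_div_mul_left _ _ hlam.ne']
  rfl

end MonomerDimer

end

open MonomerDimer in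
/-- **Total influence of an edge in a tree** (Theorem 6.3): in the monomer-dimer model
with fugacity `λ` on a tree of maximum degree at most `Δ`, the total absolute influence of
any edge `e` on the other edges is at most `min{2λΔ, 2√(1+λΔ)}`. -/
theorem tree_total_influence
    (Δ : ℕ) (lam : ℝ) (hlam : 0 < lam)
    {V : Type} [Fintype V] [DecidableEq V]
    (T : SimpleGraph V) [DecidableRel T.Adj] (htree : T.IsTree)
    (hdeg : ∀ v : V, T.degree v ≤ Δ)
    (e : Sym2 V) (he : e ∈ T.edgeFinset) :
    ∑ f ∈ T.edgeFinset.erase e, |mdInfluence T lam e f (fun _ => True)| ≤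
      min (2 * lam * (Δ : ℝ)) (2 * Real.sqrt (1 + lam * (Δ : ℝ))) := by
  induction e with
  | _ u v =>
  have hE : ∀ f, f ∈ T.edgeFinset ↔ f ∈ T.edgeSet := fun f => SimpleGraph.mem_edgeFinset
  have hdeg' : ∀ E ⊆ T.edgeFinset, ∀ w, ((nbr E w).card : ℝ) ≤ Δ := by
    intro E hsub w
    refine le_trans ?_ (Nat.cast_le.2 (hdeg w))
    rw [Nat.cast_le, ← SimpleGraph.card_neighborFinset_eq_degree]
    refine Finset.card_le_card fun c hc => ?_
    rw [SimpleGraph.mem_neighborFinset, ← SimpleGraph.mem_edgeSet, ← hE]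
    exact hsub (mem_nbr.1 hc)
  have hsum : ∑ f ∈ T.edgeFinset.erase s(u, v), |mdInfluence T lam s(u, v) f (fun _ => True)| =
      ∑ f ∈ T.edgeFinset.erase s(u, v), |pr lam (del (del T.edgeFinset u) v) f -
        pr lam (T.edgeFinset.erase s(u, v)) f| :=
    Finset.sum_congr rfl fun f hf => by
      rw [mdInfluence_eq hlam T T.edgeFinset hE he (Finset.ne_of_mem_erase hf)]
  have h1 := infl_le hlam (Nat.cast_nonneg Δ) (T.edgeFinset.erase s(u, v))
    (hdeg' _ (Finset.erase_subset _ _)) u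
  have h2 := infl_le hlam (Nat.cast_nonneg Δ) (del T.edgeFinset u)
    (hdeg' _ (Finset.filter_subset _ _)) v
  rw [le_min_iff] at h1 h2
  rw [hsum]
  refine (sum_edge_le T.edgeFinset u v).trans (le_min ?_ ?_)
  · linarith [h1.1, h2.1]
  · linarith [h1.2, h2.2]
end
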